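/- arXiv:math/0512173 — 4 statements merged into one kernel-verified Lean document; each statement's English description precedes it below -/
import Mathlib

section
/- Let n ≥ 1, m ∈ ℂ, k ∈ ℕ, let u be a log-homogeneous function of order (m,k) on ℝⁿ∖{0}, written u(y) = |y|^m Σ_{l=0}^{k} (log|y|)^l u_l(y/|y|) with u_l smooth on S^{n−1}, and let ψ be a Schwartz function on ℝⁿ. Then the integral F(z) = ∫_{ℝⁿ} |y|^z u(y) ψ(y) dy converges absolutely for Re(z) > −n − Re(m), and F extends to a meromorphic function on ℂ whose poles are contained in the set {−m−n−j : j ∈ ℕ}, each pole having order at most k+1. Moreover, for each j ∈ ℕ the polar part of F at z = −m−n−j equals Σ_{l=0}^{k} (−1)^l l! c_{j,l} (z+m+n+j)^{−(l+1)}, where c_{j,l} = Σ_{|α|=j} (∂^α ψ(0)/α!) ∫_{S^{n−1}} u_l(θ) θ^α dθ, the sum being over multi-indices α ∈ ℕⁿ with |α| = j. -/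
/-!
In polar coordinates `y = rθ` the integral `F(z)` becomes a finite sum over `l` of Mellin transforms
`∫₀^∞ r^{s-1} (log r)^l g_l(r) dr` at `s = z + m + n`, where `g_l(r) = ∫_{S^{n-1}} u_l(θ) ψ(rθ) dθ`
is a weighted spherical mean of `ψ` (`term_integral`; absolute convergence is `term_integrable`).

The function `g_l` decays rapidly at infinity. At `0⁺` it has the expansion `∑_j c_{j,l} r^j`
(`sphMean_zero`): Taylor's formula for `r ↦ ψ(rθ)` holds with a remainder uniform in `θ`
(`taylor_ray`), and the multinomial theorem in the ring of endomorphisms of the Schwartz space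
rewrites its `j`-th coefficient `(θ·∇)^j ψ(0) / j!` as `∑_{|α|=j} ∂^α ψ(0) θ^α / α!`
(`dirDeriv_pow_apply`).

Subtracting the first `N` terms of the expansion on `(0,1]` leaves a function that is `O(r^N)` at
`0⁺`, whose transform is holomorphic for `Re s > -N`, while the subtracted terms contribute
`∫₀¹ r^{s+j-1} (log r)^l dr = (-1)^l l! (s+j)^{-(l+1)}`. The resulting functions agree on common
half-planes, so they glue to a meromorphic continuation with the stated polar parts
(`mellin_continuation`).
-/

open MeasureTheory Complex Filter

noncomputable section

/-- Euclidean space `ℝⁿ`. -/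
abbrev Euc (n : ℕ) := EuclideanSpace ℝ (Fin n)

/-- Tempered distributions on `ℝⁿ`. -/
abbrev TempDist (n : ℕ) := SchwartzMap (Euc n) ℂ →L[ℂ] ℂ

/-- `u` is log-homogeneous of order `(m, k)` on `ℝⁿ ∖ {0}`, with components `ul`:
`u(y) = |y|^m ∑_{l≤k} (log|y|)^l u_l(y/|y|)` where the `u_l` are smooth functions of the
direction `y/|y|` (encoded as smooth `0`-homogeneous functions on `ℝⁿ ∖ {0}`). -/
def IsLogHomFunWith (n : ℕ) (m : ℂ) (k : ℕ) (u : Euc n → ℂ)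
    (ul : Fin (k + 1) → Euc n → ℂ) : Prop :=
  (∀ l, ContDiffOn ℝ (⊤ : ℕ∞) (ul l) {y : Euc n | y ≠ 0}) ∧
  (∀ l (t : ℝ), 0 < t → ∀ y : Euc n, y ≠ 0 → ul l (t • y) = ul l y) ∧
  (∀ y : Euc n, y ≠ 0 →
    u y = (‖y‖ : ℂ) ^ m * ∑ l : Fin (k + 1), (Real.log ‖y‖ : ℂ) ^ (l : ℕ) * ul l y)

/-- `u` is a log-homogeneous function of order `(m, k)` on `ℝⁿ ∖ {0}`. -/
def IsLogHomFun (n : ℕ) (m : ℂ) (k : ℕ) (u : Euc n → ℂ) : Prop :=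
  ∃ ul, IsLogHomFunWith n m k u ul

/-- A tempered distribution `U` is log-homogeneous of order `(m, k)` with scaling
components `Uj`: for all `t > 0` and Schwartz `ψ`,
`⟨U, t^{-n} ψ(·/t)⟩ = t^m ∑_{j≤k} (log t)^j ⟨U_j, ψ⟩`. -/
def IsLogHomDistWith (n : ℕ) (m : ℂ) (k : ℕ) (U : TempDist n)
    (Uj : Fin (k + 1) → TempDist n) : Prop :=
  ∀ (t : ℝ), 0 < t → ∀ (ψ φ : SchwartzMap (Euc n) ℂ),
    (∀ y : Euc n, φ y = ((t ^ n)⁻¹ : ℝ) • ψ (t⁻¹ • y)) →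
    U φ = (t : ℂ) ^ m * ∑ j : Fin (k + 1), (Real.log t : ℂ) ^ (j : ℕ) * Uj j ψ

/-- A tempered distribution `U` is log-homogeneous of order `(m, k)`. -/
def IsLogHomDist (n : ℕ) (m : ℂ) (k : ℕ) (U : TempDist n) : Prop :=
  ∃ Uj, IsLogHomDistWith n m k U Uj

/-- Partial derivative in the `i`-th coordinate direction. -/
def pderiv1 (n : ℕ) (i : Fin n) (f : Euc n → ℂ) : Euc n → ℂ :=
  fun x => fderiv ℝ f x (EuclideanSpace.single i 1)

/-- Iterated partial derivative `∂^α` for a multi-index `α ∈ ℕⁿ`. -/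
def multiDeriv (n : ℕ) (α : Fin n → ℕ) (f : Euc n → ℂ) : Euc n → ℂ :=
  ((List.finRange n).foldr (fun i F => (pderiv1 n i)^[α i] ∘ F) id) f

/-- Monomial `y^α = y₁^{α₁} ⋯ y_n^{α_n}`. -/
def multiPow (n : ℕ) (y : Euc n) (α : Fin n → ℕ) : ℂ :=
  ∏ i, ((y i : ℝ) : ℂ) ^ (α i)

/-- Multi-index factorial `α! = α₁! ⋯ α_n!`. -/
def multiFact (n : ℕ) (α : Fin n → ℕ) : ℕ :=
  ∏ i, Nat.factorial (α i)

/-- Integral over the unit sphere `S^{n-1}` with respect to the standard surface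
measure (the measure `volume.toSphere`). -/
def sphereIntegral (n : ℕ) (f : Euc n → ℂ) : ℂ :=
  ∫ θ : Metric.sphere (0 : Euc n) 1, f θ ∂((volume : Measure (Euc n)).toSphere)

/-! ### Directional derivatives and the multinomial theorem -/

/-- The directional derivative `∂_v` as an element of the (noncommutative) ring of `ℂ`-linear
endomorphisms of the Schwartz space, where the multinomial theorem is available. -/
def dirDeriv (n : ℕ) (v : Euc n) : Module.End ℂ (SchwartzMap (Euc n) ℂ) :=
  (LineDeriv.lineDerivOpCLM ℂ (SchwartzMap (Euc n) ℂ) v).toLinearMap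

lemma dirDeriv_apply (n : ℕ) (v : Euc n) (f : SchwartzMap (Euc n) ℂ) (x : Euc n) :
    dirDeriv n v f x = fderiv ℝ f x v := by
  simp [dirDeriv, SchwartzMap.lineDerivOp_apply_eq_fderiv]

lemma dirDeriv_commute (n : ℕ) (v w : Euc n) : Commute (dirDeriv n v) (dirDeriv n w) := by
  refine LinearMap.ext fun f => SchwartzMap.ext fun x => ?_
  have key : ∀ v w : Euc n, (dirDeriv n v * dirDeriv n w) f x
      = fderiv ℝ (fderiv ℝ f) x v w := by
    intro v w
    rw [Module.End.mul_apply, dirDeriv_apply]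
    have h1 : (⇑(dirDeriv n w f) : Euc n → ℂ) = fun y => fderiv ℝ f y w := by
      ext y; exact dirDeriv_apply n w f y
    have h2 : DifferentiableAt ℝ (fderiv ℝ f) x :=
      ((f.smooth 2).fderiv_right (m := 1) (by norm_num)).differentiable (by norm_num) x
    rw [h1, fderiv_clm_apply h2 (differentiableAt_const w)]
    simp
  rw [key, key]
  exact (((f.smooth 2).contDiffAt).isSymmSndFDerivAt (by simp)) v w

lemma dirDeriv_eq_sum (n : ℕ) (v : Euc n) :
    dirDeriv n v = ∑ i, ((v i : ℝ) : ℂ) • dirDeriv n (EuclideanSpace.single i 1) := by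
  refine LinearMap.ext fun f => SchwartzMap.ext fun x => ?_
  have h : v = ∑ i, v i • EuclideanSpace.single i (1 : ℝ) := by
    simpa using ((EuclideanSpace.basisFun (Fin n) ℝ).sum_repr v).symm
  rw [dirDeriv_apply]
  conv_lhs => rw [h, map_sum]
  simp [LinearMap.sum_apply, dirDeriv_apply]

/-- `∂^α` as a product in `Module.End`, in the fixed order of coordinates used by `multiDeriv`. -/
lemma multiDeriv_eq_prod (n : ℕ) (α : Fin n → ℕ) (ψ : SchwartzMap (Euc n) ℂ) :
    multiDeriv n α ψ = ⇑(((List.finRange n).map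
      (fun i => dirDeriv n (EuclideanSpace.single i 1) ^ α i)).prod ψ) := by
  have hpow : ∀ (i : Fin n) (a : ℕ) (f : SchwartzMap (Euc n) ℂ),
      (pderiv1 n i)^[a] (⇑f) = ⇑((dirDeriv n (EuclideanSpace.single i 1) ^ a) f) := by
    intro i a f
    induction a with
    | zero => simp
    | succ a ih =>
      rw [Function.iterate_succ_apply', ih, pow_succ', Module.End.mul_apply]
      ext x
      rw [dirDeriv_apply]
      rfl
  unfold multiDeriv
  induction List.finRange n with
  | nil => simp
  | cons i l ih =>
    rw [List.foldr_cons, Function.comp_apply, ih, hpow, List.map_cons, List.prod_cons,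
      Module.End.mul_apply]

lemma list_prod_smul_pow {ι A : Type*} [Ring A] [Algebra ℂ A] (l : List ι) (c : ι → ℂ)
    (D : ι → A) (a : ι → ℕ) :
    (l.map (fun i => (c i • D i) ^ a i)).prod
      = (l.map (fun i => c i ^ a i)).prod • (l.map (fun i => D i ^ a i)).prod := by
  induction l with
  | nil => simp
  | cons i l ih =>
    rw [List.map_cons, List.prod_cons, ih, List.map_cons, List.prod_cons, List.map_cons,
      List.prod_cons, smul_pow, smul_mul_smul_comm]

/-- The multinomial theorem for directional derivatives:
`(θ·∇)^j = ∑_{|α|=j} (j!/α!) θ^α ∂^α`. -/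
lemma dirDeriv_pow_apply (n : ℕ) (θ : Euc n) (j : ℕ) (ψ : SchwartzMap (Euc n) ℂ) (x : Euc n) :
    (dirDeriv n θ ^ j) ψ x = (j.factorial : ℂ) * ∑ α ∈ Finset.Nat.antidiagonalTuple n j,
      (multiDeriv n α ψ x / (multiFact n α : ℂ)) * multiPow n θ α := by
  have hc : ((Finset.univ : Finset (Fin n)) : Set (Fin n)).Pairwise
      (Function.onFun Commute
        (fun i => ((θ i : ℝ) : ℂ) • dirDeriv n (EuclideanSpace.single i 1))) := by
    intro i _ k _ _
    exact ((dirDeriv_commute n _ _).smul_left _).smul_right _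
  have hset : Finset.piAntidiag Finset.univ j = Finset.Nat.antidiagonalTuple n j := by
    ext α
    simp [Finset.mem_piAntidiag, Finset.Nat.mem_antidiagonalTuple]
  rw [dirDeriv_eq_sum, Finset.sum_pow_eq_sum_piAntidiag_of_commute _ _ hc, hset,
    LinearMap.sum_apply, _root_.sum_apply, Finset.mul_sum]
  refine Finset.sum_congr rfl fun α hα => ?_
  have hsum : ∑ i, α i = j := by simpa [Finset.Nat.mem_antidiagonalTuple] using hα
  have hprod : ∀ h, (Finset.univ : Finset (Fin n)).noncommProd
      (fun i => (((θ i : ℝ) : ℂ) • dirDeriv n (EuclideanSpace.single i 1)) ^ α i) h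
      = multiPow n θ α • ((List.finRange n).map
      (fun i => dirDeriv n (EuclideanSpace.single i 1) ^ α i)).prod := by
    intro h
    have := Finset.noncommProd_toFinset (List.finRange n)
      (fun i => (((θ i : ℝ) : ℂ) • dirDeriv n (EuclideanSpace.single i 1)) ^ α i)
      (by simpa using h) (List.nodup_finRange n)
    simp only [List.toFinset_finRange] at this
    rw [this, list_prod_smul_pow]
    rw [multiPow, ← List.prod_ofFn, List.ofFn_eq_map]
  rw [hprod, multiDeriv_eq_prod]
  have hm : (multiFact n α : ℂ) * (Nat.multinomial Finset.univ α : ℂ) = (j.factorial : ℂ) := by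
    rw [← hsum, ← Nat.multinomial_spec]
    simp [multiFact]
  have hne : (multiFact n α : ℂ) ≠ 0 := by
    simp [multiFact, Finset.prod_ne_zero_iff, Nat.factorial_ne_zero]
  rw [← hm, ← nsmul_eq_mul, LinearMap.smul_apply, LinearMap.smul_apply, ← Nat.cast_smul_eq_nsmul ℂ,
    _root_.smul_apply, _root_.smul_apply, smul_eq_mul, smul_eq_mul]
  field_simp

/-- Along a ray, the `j`-th derivative is the `j`-th power of the directional derivative. -/
lemma iteratedDeriv_ray (n : ℕ) (θ : Euc n) (j : ℕ) (ψ : SchwartzMap (Euc n) ℂ) :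
    iteratedDeriv j (fun r : ℝ => ψ (r • θ)) = fun r : ℝ => (dirDeriv n θ ^ j) ψ (r • θ) := by
  induction j with
  | zero => simp
  | succ j ih =>
    rw [iteratedDeriv_succ, ih]
    ext r
    rw [pow_succ', Module.End.mul_apply, dirDeriv_apply]
    have h1 : HasDerivAt (fun r : ℝ => r • θ) θ r := by
      simpa using (hasDerivAt_id r).smul_const θ
    exact ((((dirDeriv n θ ^ j) ψ).differentiableAt (x := r • θ)).hasFDerivAt.comp_hasDerivAt r
      h1).deriv

/-! ### Mellin transforms with powers of the logarithm -/

open scoped Topology in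
/-- Multiplying by a power of `log` costs an arbitrarily small power of `t` at infinity. -/
lemma isBigO_top_log_pow (l : ℕ) : ∀ {f : ℝ → ℂ} {a b : ℝ}, b < a →
    f =O[atTop] (fun t : ℝ => t ^ (-a)) →
    (fun t : ℝ => (Real.log t : ℂ) ^ l * f t) =O[atTop] (fun t : ℝ => t ^ (-b)) := by
  induction l with
  | zero =>
    intro f a b hab hf
    simp only [pow_zero, one_mul]
    refine hf.trans (Asymptotics.IsBigO.of_bound 1 ?_)
    filter_upwards [eventually_ge_atTop 1] with t ht
    have h0 : (0 : ℝ) ≤ t := zero_le_one.trans ht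
    rw [Real.norm_of_nonneg (Real.rpow_nonneg h0 _),
      Real.norm_of_nonneg (Real.rpow_nonneg h0 _), one_mul]
    exact Real.rpow_le_rpow_of_exponent_le ht (by linarith)
  | succ l ih =>
    intro f a b hab hf
    have h1 := isBigO_rpow_top_log_smul (b := (a + b) / 2) (by linarith) hf
    have h2 := ih (b := b) (by linarith) h1
    refine h2.congr_left fun t => ?_
    simp [pow_succ]
    ring

open scoped Topology in
/-- Multiplying by a power of `log` costs an arbitrarily small power of `t` at `0⁺`. -/
lemma isBigO_zero_log_pow (l : ℕ) : ∀ {f : ℝ → ℂ} {a b : ℝ}, a < b →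
    f =O[𝓝[>] 0] (fun t : ℝ => t ^ (-a)) →
    (fun t : ℝ => (Real.log t : ℂ) ^ l * f t) =O[𝓝[>] 0] (fun t : ℝ => t ^ (-b)) := by
  induction l with
  | zero =>
    intro f a b hab hf
    simp only [pow_zero, one_mul]
    refine hf.trans (Asymptotics.IsBigO.of_bound 1 ?_)
    filter_upwards [Ioo_mem_nhdsGT (show (0 : ℝ) < 1 by norm_num)] with t ht
    rw [Real.norm_of_nonneg (Real.rpow_nonneg ht.1.le _),
      Real.norm_of_nonneg (Real.rpow_nonneg ht.1.le _), one_mul]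
    exact Real.rpow_le_rpow_of_exponent_ge ht.1 ht.2.le (by linarith)
  | succ l ih =>
    intro f a b hab hf
    have h1 := isBigO_rpow_zero_log_smul (b := (a + b) / 2) (by linarith) hf
    have h2 := ih (b := b) (by linarith) h1
    refine h2.congr_left fun t => ?_
    simp [pow_succ]
    ring

lemma locallyIntegrableOn_log_pow {f : ℝ → ℂ} (l : ℕ)
    (hf : LocallyIntegrableOn f (Set.Ioi 0)) :
    LocallyIntegrableOn (fun t : ℝ => (Real.log t : ℂ) ^ l * f t) (Set.Ioi 0) := by
  refine hf.continuousOn_mul ?_ isOpen_Ioi.isLocallyClosed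
  refine ContinuousOn.pow ?_ _
  refine continuous_ofReal.comp_continuousOn ?_
  exact Real.continuousOn_log.mono fun t ht => (ne_of_gt ht)

open scoped Topology in
/-- If `f` decays rapidly at infinity and is `O(t^N)` at `0⁺`, the Mellin transform of
`(log t)^l f` converges and is holomorphic for `Re s > -N`, and its derivative is the Mellin
transform of `(log t)^(l+1) f`. -/
lemma mellin_log_pow {f : ℝ → ℂ} (N : ℝ) (l : ℕ) (hf : LocallyIntegrableOn f (Set.Ioi 0))
    (htop : ∀ a : ℝ, f =O[atTop] (fun t : ℝ => t ^ (-a)))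
    (hbot : f =O[𝓝[>] 0] (fun t : ℝ => t ^ N)) {s : ℂ} (hs : -N < s.re) :
    MellinConvergent (fun t : ℝ => (Real.log t : ℂ) ^ l * f t) s ∧
    HasDerivAt (mellin (fun t : ℝ => (Real.log t : ℂ) ^ l * f t))
      (mellin (fun t : ℝ => (Real.log t : ℂ) ^ (l + 1) * f t) s) s := by
  have h1 := locallyIntegrableOn_log_pow l hf
  have h2 := isBigO_top_log_pow l (b := s.re + 1) (lt_add_one _) (htop (s.re + 1 + 1))
  have h3 := isBigO_zero_log_pow l (f := f) (a := -N) (b := (-N + s.re) / 2) (by linarith)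
    (by simpa using hbot)
  refine ⟨mellinConvergent_of_isBigO_rpow h1 h2 (lt_add_one _) h3 (by linarith), ?_⟩
  have := (mellin_hasDerivAt_of_isBigO_rpow h1 h2 (lt_add_one _) h3 (by linarith)).2
  have hfun : (fun t : ℝ => (Real.log t : ℂ) ^ (l + 1) * f t)
      = fun t : ℝ => Real.log t • ((Real.log t : ℂ) ^ l * f t) := by
    ext t
    rw [real_smul, pow_succ]
    ring
  rwa [hfun]

/-- `∫₀¹ t^{s-1} t^j (log t)^l dt = (-1)^l l! / (s+j)^{l+1}`, the source of all the poles. -/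
lemma mellin_log_pow_monomial (j l : ℕ) {s : ℂ} (hs : -(j : ℝ) < s.re) :
    MellinConvergent (fun t : ℝ => (Real.log t : ℂ) ^ l *
      Set.indicator (Set.Ioc 0 1) (fun t : ℝ => (t : ℂ) ^ j) t) s ∧
    mellin (fun t : ℝ => (Real.log t : ℂ) ^ l *
      Set.indicator (Set.Ioc 0 1) (fun t : ℝ => (t : ℂ) ^ j) t) s
      = (-1) ^ l * (l.factorial : ℂ) * (s + j) ^ (-(l : ℤ) - 1) := by
  set f : ℝ → ℂ := Set.indicator (Set.Ioc 0 1) (fun t : ℝ => (t : ℂ) ^ j) with hfdef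
  have hloc : LocallyIntegrableOn f (Set.Ioi 0) := by
    refine Integrable.locallyIntegrable ?_ |>.locallyIntegrableOn _
    rw [hfdef, integrable_indicator_iff measurableSet_Ioc]
    exact ((by fun_prop : Continuous fun t : ℝ => (t : ℂ) ^ j).integrableOn_Icc).mono_set
      Set.Ioc_subset_Icc_self
  have htop : ∀ a : ℝ, f =O[atTop] (fun t : ℝ => t ^ (-a)) := by
    intro a
    refine Asymptotics.IsBigO.of_bound 1 ?_
    filter_upwards [eventually_gt_atTop 1] with t ht
    rw [hfdef, Set.indicator_of_notMem (fun h => absurd h.2 (not_le.2 ht))]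
    simp
  have hbot : f =O[nhdsWithin 0 (Set.Ioi 0)] (fun t : ℝ => t ^ (j : ℝ)) := by
    refine Asymptotics.IsBigO.of_bound 1 (Eventually.of_forall fun t => ?_)
    by_cases h : t ∈ Set.Ioc (0 : ℝ) 1
    · rw [hfdef, Set.indicator_of_mem h]; simp
    · rw [hfdef, Set.indicator_of_notMem h]; simp
  refine ⟨(mellin_log_pow j l hloc htop hbot hs).1, ?_⟩
  induction l generalizing s with
  | zero =>
    have := (hasMellin_cpow_Ioc (j : ℂ) (s := s) (by simp; linarith)).2
    simp only [cpow_natCast] at this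
    simpa using this
  | succ l ih =>
    -- differentiating in `s` inserts a factor `log t` under the integral
    have h1 := (mellin_log_pow j l hloc htop hbot hs).2
    have hne : s + j ≠ 0 := by
      intro h
      have := congrArg re h
      simp at this
      linarith
    have h2 : HasDerivAt (fun s : ℂ => (-1) ^ l * (l.factorial : ℂ) * (s + j) ^ (-(l : ℤ) - 1))
        ((-1) ^ l * (l.factorial : ℂ) * (((-(l : ℤ) - 1 : ℤ) : ℂ) * (s + j) ^ (-(l : ℤ) - 1 - 1) * 1))
        s := by
      refine HasDerivAt.const_mul _ ?_
      exact (hasDerivAt_zpow (-(l : ℤ) - 1) (s + j) (Or.inl hne)).comp s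
        ((hasDerivAt_id s).add_const _)
    have hev : mellin (fun t : ℝ => (Real.log t : ℂ) ^ l * f t) =ᶠ[nhds s]
        (fun s : ℂ => (-1) ^ l * (l.factorial : ℂ) * (s + j) ^ (-(l : ℤ) - 1)) := by
      have : IsOpen {w : ℂ | -(j : ℝ) < w.re} := isOpen_lt continuous_const continuous_re
      filter_upwards [this.mem_nhds hs] with w hw using ih hw
    rw [h1.unique (h2.congr_of_eventuallyEq hev)]
    rw [show (-((l + 1 : ℕ) : ℤ) - 1) = -(l : ℤ) - 1 - 1 by push_cast; ring, Nat.factorial_succ]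
    push_cast
    ring

open scoped Topology in
/-- Meromorphic continuation of the Mellin transform of `(log t)^l g` when `g` decays rapidly at
infinity and has an asymptotic expansion `∑ a_j t^j` at `0⁺`: the poles come from subtracting the
expansion on `(0,1]`. -/
lemma mellin_continuation (g : ℝ → ℂ) (a : ℕ → ℂ) (l : ℕ)
    (hg : LocallyIntegrableOn g (Set.Ioi 0))
    (htop : ∀ b : ℝ, g =O[atTop] (fun t : ℝ => t ^ (-b)))
    (hbot : ∀ N : ℕ, (fun t : ℝ => g t - ∑ j ∈ Finset.range N, a j * (t : ℂ) ^ j)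
      =O[𝓝[>] 0] (fun t : ℝ => t ^ (N : ℝ))) :
    ∃ A : ℂ → ℂ,
      (∀ s : ℂ, 0 < s.re → A s = mellin (fun t : ℝ => (Real.log t : ℂ) ^ l * g t) s) ∧
      (∀ s : ℂ, (∀ j : ℕ, s ≠ -(j : ℂ)) → AnalyticAt ℂ A s) ∧
      (∀ j : ℕ, ∃ H : ℂ → ℂ, AnalyticAt ℂ H (-(j : ℂ)) ∧
        ∀ᶠ s in 𝓝 (-(j : ℂ)),
          A s = H s + (-1) ^ l * (l.factorial : ℂ) * a j * (s + j) ^ (-(l : ℤ) - 1)) := by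
  -- the monomial cut off to `(0, 1]`, the remainders, and their Mellin transforms
  set e : ℕ → ℝ → ℂ := fun j => Set.indicator (Set.Ioc 0 1) (fun t : ℝ => (t : ℂ) ^ j) with he
  set R : ℕ → ℝ → ℂ := fun N t => g t - ∑ j ∈ Finset.range N, a j * e j t with hR
  have heloc : ∀ j, LocallyIntegrableOn (e j) (Set.Ioi 0) := by
    intro j
    refine Integrable.locallyIntegrable ?_ |>.locallyIntegrableOn _
    rw [he, integrable_indicator_iff measurableSet_Ioc]
    exact ((by fun_prop : Continuous fun t : ℝ => (t : ℂ) ^ j).integrableOn_Icc).mono_set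
      Set.Ioc_subset_Icc_self
  have hRsucc : ∀ N t, R N t = R (N + 1) t + a N * e N t := by
    intro N t
    simp only [hR, Finset.sum_range_succ]
    ring
  have hRloc : ∀ N, LocallyIntegrableOn (R N) (Set.Ioi 0) := by
    intro N
    induction N with
    | zero => simpa [hR] using hg
    | succ N ih =>
      have : R (N + 1) = R N - fun t => a N • e N t := by
        ext t; simp [hRsucc N t]
      rw [this]
      exact ih.sub ((heloc N).smul (a N))
  have hRtop : ∀ N (b : ℝ), R N =O[atTop] (fun t : ℝ => t ^ (-b)) := by
    intro N b
    refine (htop b).congr' ?_ EventuallyEq.rfl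
    filter_upwards [eventually_gt_atTop 1] with t ht
    have : ∀ j, e j t = 0 := fun j =>
      Set.indicator_of_notMem (fun h => absurd h.2 (not_le.2 ht)) _
    simp [hR, this]
  have hRbot : ∀ N : ℕ, R N =O[𝓝[>] 0] (fun t : ℝ => t ^ (N : ℝ)) := by
    intro N
    refine (hbot N).congr' ?_ EventuallyEq.rfl
    filter_upwards [Ioo_mem_nhdsGT (show (0 : ℝ) < 1 by norm_num)] with t ht
    have : ∀ j, e j t = (t : ℂ) ^ j := fun j =>
      Set.indicator_of_mem (show t ∈ Set.Ioc (0 : ℝ) 1 from ⟨ht.1, ht.2.le⟩) _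
    simp [hR, this]
  set P : ℕ → ℂ → ℂ := fun j s =>
    (-1) ^ l * (l.factorial : ℂ) * a j * (s + j) ^ (-(l : ℤ) - 1) with hP
  set M : ℕ → ℂ → ℂ := fun N => mellin (fun t : ℝ => (Real.log t : ℂ) ^ l * R N t) with hM
  set B : ℕ → ℂ → ℂ := fun N s => M N s + ∑ j ∈ Finset.range N, P j s with hB
  have hopen : ∀ N : ℕ, IsOpen {w : ℂ | -(N : ℝ) < w.re} := fun N =>
    isOpen_lt continuous_const continuous_re
  have hMan : ∀ (N : ℕ) (s : ℂ), -(N : ℝ) < s.re → AnalyticAt ℂ (M N) s := by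
    intro N s hs
    have : DifferentiableOn ℂ (M N) {w : ℂ | -(N : ℝ) < w.re} := fun w hw =>
      (mellin_log_pow N l (hRloc N) (hRtop N) (hRbot N)
        hw).2.differentiableAt.differentiableWithinAt
    exact this.analyticAt ((hopen N).mem_nhds hs)
  have hstep : ∀ (N : ℕ) (s : ℂ), -(N : ℝ) < s.re → B N s = B (N + 1) s := by
    intro N s hs
    have h1 := (mellin_log_pow (N + 1 : ℕ) l (hRloc (N + 1)) (hRtop (N + 1)) (hRbot (N + 1))
      (s := s) (by push_cast; linarith)).1
    have h2 := mellin_log_pow_monomial N l hs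
    have h3 := hasMellin_const_smul h2.1 (a N)
    have h4 := (hasMellin_add h1 h3.1).2
    have h5 : M N s = M (N + 1) s + P N s := by
      simp only [hM, hP]
      rw [h3.2, h2.2] at h4
      rw [show (-1) ^ l * (l.factorial : ℂ) * a N * (s + N) ^ (-(l : ℤ) - 1)
        = a N • ((-1) ^ l * (l.factorial : ℂ) * (s + N) ^ (-(l : ℤ) - 1)) by
          rw [smul_eq_mul]; ring, ← h4]
      congr 1
      ext t
      rw [hRsucc N t, smul_eq_mul]
      ring
    simp only [hB, Finset.sum_range_succ, h5]
    ring
  have hle : ∀ (N K : ℕ) (s : ℂ), -(N : ℝ) < s.re → B N s = B (N + K) s := by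
    intro N K s hs
    induction K with
    | zero => rfl
    | succ K ih =>
      rw [ih, ← add_assoc]
      exact hstep _ _ (by push_cast; linarith [(Nat.cast_nonneg K : (0 : ℝ) ≤ K)])
  -- `B N` continues the transform to `Re s > -N` and the `B N` agree on overlaps, so at each
  -- point any large enough `N` may be used; `⌊-s.re⌋₊ + 1` is such a choice
  set A : ℂ → ℂ := fun s => B (⌊-s.re⌋₊ + 1) s with hA
  have hAB : ∀ (N : ℕ) (s : ℂ), -(N : ℝ) < s.re → A s = B N s := by
    intro N s hs
    have h0 : -((⌊-s.re⌋₊ + 1 : ℕ) : ℝ) < s.re := by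
      have := Nat.lt_floor_add_one (-s.re)
      push_cast
      linarith
    simp only [hA]
    rw [hle _ N s h0, hle N (⌊-s.re⌋₊ + 1) s hs, add_comm]
  have hAev : ∀ (N : ℕ) (s : ℂ), -(N : ℝ) < s.re → A =ᶠ[𝓝 s] B N := by
    intro N s hs
    filter_upwards [(hopen N).mem_nhds hs] with w hw using hAB N w hw
  have hPan : ∀ (j : ℕ) (s : ℂ), s ≠ -(j : ℂ) → AnalyticAt ℂ (P j) s := by
    intro j s hs
    have hne : s + j ≠ 0 := fun h => hs (eq_neg_of_add_eq_zero_left h)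
    exact analyticAt_const.mul
      (AnalyticAt.zpow (analyticAt_id.add analyticAt_const) hne)
  refine ⟨A, fun s hs => ?_, fun s hs => ?_, fun j => ?_⟩
  · rw [hAB 0 s (by simpa using hs)]
    simp [hB, hM, hR]
  · obtain ⟨N, hN⟩ := exists_nat_gt (-s.re)
    have hs' : -(N : ℝ) < s.re := by linarith
    refine AnalyticAt.congr ?_ (hAev N s hs').symm
    exact (hMan N s hs').add (Finset.analyticAt_fun_sum _ fun j _ => hPan j s (hs j))
  · have hs' : -((j + 1 : ℕ) : ℝ) < (-(j : ℂ)).re := by simp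
    refine ⟨fun s => M (j + 1) s + ∑ i ∈ Finset.range j, P i s, ?_, ?_⟩
    · refine (hMan _ _ hs').add (Finset.analyticAt_fun_sum _ fun i hi => hPan i _ ?_)
      rw [Finset.mem_range] at hi
      intro h
      rw [neg_inj, Nat.cast_inj] at h
      omega
    · filter_upwards [hAev _ _ hs'] with s hs
      rw [hs]
      simp only [hB, Finset.sum_range_succ]
      ring

/-! ### Taylor expansion along rays and spherical means -/

lemma multiPow_continuous (n : ℕ) (α : Fin n → ℕ) :
    Continuous (fun θ : Euc n => multiPow n θ α) := by
  unfold multiPow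
  fun_prop

lemma norm_multiPow_le (n : ℕ) (α : Fin n → ℕ) {θ : Euc n} (hθ : ‖θ‖ = 1) :
    ‖multiPow n θ α‖ ≤ 1 := by
  rw [multiPow, norm_prod]
  refine Finset.prod_le_one (fun i _ => norm_nonneg _) fun i _ => ?_
  rw [norm_pow]
  refine pow_le_one₀ (norm_nonneg _) ?_
  rw [norm_real, ← hθ]
  exact PiLp.norm_apply_le θ i

/-- Derivatives of `ψ` of order `j` along unit vectors are bounded uniformly in the direction. -/
lemma dirDeriv_pow_bound (n j : ℕ) (ψ : SchwartzMap (Euc n) ℂ) :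
    ∃ C : ℝ, ∀ θ : Euc n, ‖θ‖ = 1 → ∀ x : Euc n, ‖(dirDeriv n θ ^ j) ψ x‖ ≤ C := by
  have h : ∀ α : Fin n → ℕ, ∃ C : ℝ, ∀ x, ‖multiDeriv n α ψ x‖ ≤ C := by
    intro α
    rw [multiDeriv_eq_prod]
    exact ⟨_, fun x => SchwartzMap.norm_le_seminorm ℂ _ x⟩
  choose C hC using h
  refine ⟨(j.factorial : ℝ) * ∑ α ∈ Finset.Nat.antidiagonalTuple n j,
    (C α / (multiFact n α : ℝ)) * 1, fun θ hθ x => ?_⟩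
  rw [dirDeriv_pow_apply, norm_mul, norm_natCast]
  refine mul_le_mul_of_nonneg_left ?_ (Nat.cast_nonneg _)
  refine (norm_sum_le _ _).trans (Finset.sum_le_sum fun α _ => ?_)
  have hC0 : 0 ≤ C α := (norm_nonneg _).trans (hC α 0)
  rw [norm_mul, norm_div, norm_natCast]
  gcongr
  · exact hC α x
  · exact norm_multiPow_le n α hθ

/-- The degree-`j` homogeneous Taylor polynomial of `ψ` at `0`. -/
def taylorHom (n : ℕ) (ψ : SchwartzMap (Euc n) ℂ) (j : ℕ) (θ : Euc n) : ℂ :=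
  ∑ α ∈ Finset.Nat.antidiagonalTuple n j,
    (multiDeriv n α (⇑ψ) 0 / (multiFact n α : ℂ)) * multiPow n θ α

lemma taylorHom_continuous (n : ℕ) (ψ : SchwartzMap (Euc n) ℂ) (j : ℕ) :
    Continuous (taylorHom n ψ j) :=
  continuous_finsetSum _ fun α _ => continuous_const.mul (multiPow_continuous n α)

/-- Taylor expansion of `ψ` along rays, with a remainder uniform in the direction. -/
lemma taylor_ray (n : ℕ) (ψ : SchwartzMap (Euc n) ℂ) (N : ℕ) :
    ∃ C : ℝ, ∀ θ : Euc n, ‖θ‖ = 1 → ∀ t ∈ Set.Icc (0 : ℝ) 1,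
      ‖ψ (t • θ) - ∑ j ∈ Finset.range N, taylorHom n ψ j θ * (t : ℂ) ^ j‖ ≤ C * t ^ N := by
  obtain ⟨C, hC⟩ := dirDeriv_pow_bound n N ψ
  cases N with
  | zero =>
    refine ⟨C, fun θ hθ t ht => ?_⟩
    simpa using hC θ hθ (t • θ)
  | succ N =>
    refine ⟨C / N.factorial, fun θ hθ t ht => ?_⟩
    have hsm : ContDiff ℝ (⊤ : ℕ∞) (fun r : ℝ => ψ (r • θ)) :=
      (ψ.smooth ⊤).comp (contDiff_id.smul contDiff_const)
    have hud := uniqueDiffOn_Icc (show (0 : ℝ) < 1 by norm_num)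
    have hiter : ∀ j, ∀ r ∈ Set.Icc (0 : ℝ) 1,
        iteratedDerivWithin j (fun r : ℝ => ψ (r • θ)) (Set.Icc 0 1) r
          = (dirDeriv n θ ^ j) ψ (r • θ) := by
      intro j r hr
      rw [iteratedDerivWithin_eq_iteratedDeriv hud
        ((hsm.of_le (by exact_mod_cast le_top)).contDiffAt) hr, iteratedDeriv_ray]
    have := taylor_mean_remainder_bound (n := N) (zero_le_one (α := ℝ))
      (hsm.of_le (by exact_mod_cast le_top)).contDiffOn ht
      (fun y hy => by rw [hiter _ y hy]; exact hC θ hθ _)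
    rw [taylor_within_apply] at this
    convert this using 1
    · congr 2
      refine Finset.sum_congr rfl fun j _ => ?_
      rw [hiter j 0 (by simp), zero_smul, dirDeriv_pow_apply, real_smul, taylorHom]
      have : (j.factorial : ℂ) ≠ 0 := by exact_mod_cast j.factorial_ne_zero
      push_cast
      rw [sub_zero]
      field_simp
    · rw [sub_zero]; ring

/-- The weighted spherical mean `r ↦ ∫_{S^{n-1}} w(θ) ψ(rθ) dθ`. -/
def sphMean (n : ℕ) (w : Euc n → ℂ) (ψ : SchwartzMap (Euc n) ℂ) (r : ℝ) : ℂ :=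
  sphereIntegral n (fun θ => w θ * ψ (r • θ))

section
variable {n : ℕ} {w : Euc n → ℂ}

lemma sphere_integrable {f : Euc n → ℂ} (hf : ContinuousOn f {y : Euc n | y ≠ 0}) :
    Integrable (fun θ : Metric.sphere (0 : Euc n) 1 => f θ)
      ((volume : Measure (Euc n)).toSphere) := by
  have : Continuous (fun θ : Metric.sphere (0 : Euc n) 1 => f θ) :=
    hf.comp_continuous continuous_subtype_val fun θ => ne_zero_of_mem_unit_sphere θ
  exact this.integrable_of_hasCompactSupport (HasCompactSupport.of_compactSpace _)

lemma sphere_bound (hw : ContinuousOn w {y : Euc n | y ≠ 0}) :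
    ∃ C : ℝ, 0 ≤ C ∧ ∀ θ : Euc n, ‖θ‖ = 1 → ‖w θ‖ ≤ C := by
  have hc : ContinuousOn w (Metric.sphere (0 : Euc n) 1) :=
    hw.mono fun θ hθ => ne_zero_of_mem_unit_sphere ⟨θ, hθ⟩
  obtain ⟨C, hC⟩ := (isCompact_sphere (0 : Euc n) 1).exists_bound_of_continuousOn hc
  exact ⟨max C 0, le_max_right _ _, fun θ hθ => (hC θ (by simpa using hθ)).trans (le_max_left _ _)⟩

/-- A uniform bound on the sphere passes to the spherical integral. -/
lemma norm_sphereIntegral_le {C : ℝ} {f : Euc n → ℂ} (hf : ∀ θ : Euc n, ‖θ‖ = 1 → ‖f θ‖ ≤ C) :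
    ‖sphereIntegral n f‖
      ≤ C * ((volume : Measure (Euc n)).toSphere).real Set.univ :=
  norm_integral_le_of_norm_le_const (Eventually.of_forall fun θ => hf θ (by simp))

lemma sphMean_continuous (hw : ContinuousOn w {y : Euc n | y ≠ 0})
    (ψ : SchwartzMap (Euc n) ℂ) : Continuous (sphMean n w ψ) := by
  obtain ⟨C, hC0, hC⟩ := sphere_bound hw
  refine continuous_of_dominated (bound := fun _ => C * SchwartzMap.seminorm ℂ 0 0 ψ)
    (fun r => ?_) (fun r => Eventually.of_forall fun θ => ?_) (integrable_const _)
    (Eventually.of_forall fun θ => ?_)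
  · exact (sphere_integrable (f := fun θ => w θ * ψ (r • θ))
      (hw.mul (ψ.continuous.comp (continuous_const_smul r)).continuousOn)).aestronglyMeasurable
  · rw [norm_mul]
    exact mul_le_mul (hC θ (by simp)) (SchwartzMap.norm_le_seminorm ℂ _ _) (norm_nonneg _) hC0
  · exact continuous_const.mul (ψ.continuous.comp (continuous_id.smul continuous_const))

/-- The spherical mean inherits the rapid decay of `ψ`. -/
lemma sphMean_top (hw : ContinuousOn w {y : Euc n | y ≠ 0})
    (ψ : SchwartzMap (Euc n) ℂ) (b : ℝ) :
    sphMean n w ψ =O[atTop] (fun t : ℝ => t ^ (-b)) := by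
  obtain ⟨C, hC0, hC⟩ := sphere_bound hw
  obtain ⟨N, hN⟩ := exists_nat_ge b
  obtain ⟨D, hD0, hD⟩ := ψ.decay N 0
  refine Asymptotics.IsBigO.of_bound
    (C * D * ((volume : Measure (Euc n)).toSphere).real Set.univ) ?_
  filter_upwards [eventually_ge_atTop 1] with t ht
  have ht0 : 0 < t := by linarith
  have h1 : ‖sphMean n w ψ t‖ ≤ (C * (D * t ^ (-b))) *
      ((volume : Measure (Euc n)).toSphere).real Set.univ := by
    refine norm_sphereIntegral_le fun θ hθ => ?_
    rw [norm_mul]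
    refine mul_le_mul (hC θ hθ) ?_ (norm_nonneg _) hC0
    have h2 := hD (t • θ)
    rw [norm_iteratedFDeriv_zero, norm_smul, hθ, mul_one, Real.norm_of_nonneg ht0.le] at h2
    have h3 : t ^ b ≤ t ^ N := by
      rw [← Real.rpow_natCast]
      exact Real.rpow_le_rpow_of_exponent_le ht hN
    rw [Real.rpow_neg ht0.le, ← div_eq_mul_inv, le_div_iff₀ (Real.rpow_pos_of_pos ht0 _),
      mul_comm]
    exact (mul_le_mul_of_nonneg_right h3 (norm_nonneg _)).trans h2
  rw [Real.norm_of_nonneg (Real.rpow_nonneg ht0.le _)]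
  linarith

/-- The coefficient `∑_{|α|=j} (∂^α ψ(0)/α!) ∫ w(θ) θ^α dθ` of `t^j` in the
expansion of the spherical mean at `0`. -/
def sphCoeff (n : ℕ) (w : Euc n → ℂ) (ψ : SchwartzMap (Euc n) ℂ) (j : ℕ) : ℂ :=
  ∑ α ∈ Finset.Nat.antidiagonalTuple n j,
    (multiDeriv n α (⇑ψ) 0 / (multiFact n α : ℂ)) *
      sphereIntegral n (fun θ => w θ * multiPow n θ α)

lemma sphCoeff_eq (hw : ContinuousOn w {y : Euc n | y ≠ 0})
    (ψ : SchwartzMap (Euc n) ℂ) (j : ℕ) :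
    sphCoeff n w ψ j = sphereIntegral n (fun θ => w θ * taylorHom n ψ j θ) := by
  unfold sphCoeff sphereIntegral taylorHom
  simp_rw [Finset.mul_sum]
  rw [integral_finsetSum]
  · refine Finset.sum_congr rfl fun α _ => ?_
    rw [← integral_const_mul]
    refine integral_congr_ae (Eventually.of_forall fun θ => ?_)
    simp only
    ring
  · intro α _
    exact sphere_integrable (f := fun θ => w θ * (multiDeriv n α (⇑ψ) 0 / (multiFact n α : ℂ) *
      multiPow n θ α)) (hw.mul (continuous_const.mul (multiPow_continuous n α)).continuousOn)

open scoped Topology in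
/-- The spherical mean has the asymptotic expansion `∑ c_j t^j` at `0⁺`, obtained by integrating
the expansion along rays over the sphere. -/
lemma sphMean_zero (hw : ContinuousOn w {y : Euc n | y ≠ 0})
    (ψ : SchwartzMap (Euc n) ℂ) (N : ℕ) :
    (fun t : ℝ => sphMean n w ψ t - ∑ j ∈ Finset.range N, sphCoeff n w ψ j * (t : ℂ) ^ j)
      =O[𝓝[>] 0] (fun t : ℝ => t ^ (N : ℝ)) := by
  obtain ⟨C, hC0, hC⟩ := sphere_bound hw
  obtain ⟨D, hD⟩ := taylor_ray n ψ N
  refine Asymptotics.IsBigO.of_bound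
    (C * D * ((volume : Measure (Euc n)).toSphere).real Set.univ) ?_
  filter_upwards [Ioo_mem_nhdsGT (show (0 : ℝ) < 1 by norm_num)] with t ht
  have key : sphMean n w ψ t - ∑ j ∈ Finset.range N, sphCoeff n w ψ j * (t : ℂ) ^ j
      = sphereIntegral n (fun θ => w θ *
        (ψ (t • θ) - ∑ j ∈ Finset.range N, taylorHom n ψ j θ * (t : ℂ) ^ j)) := by
    have hT : ∀ j, Integrable (fun θ : Metric.sphere (0 : Euc n) 1 =>
        w θ * taylorHom n ψ j θ * (t : ℂ) ^ j) ((volume : Measure (Euc n)).toSphere) :=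
      fun j => (sphere_integrable (f := fun θ => w θ * taylorHom n ψ j θ)
        (hw.mul (taylorHom_continuous n ψ j).continuousOn)).mul_const _
    have hI := sphere_integrable (f := fun θ => w θ * ψ (t • θ))
      (hw.mul (ψ.continuous.comp (continuous_const_smul t)).continuousOn)
    simp_rw [sphCoeff_eq hw]
    unfold sphMean sphereIntegral
    simp_rw [← integral_mul_const]
    rw [← integral_finsetSum _ fun j _ => hT j,
      ← integral_sub hI (integrable_finsetSum _ fun j _ => hT j)]
    refine integral_congr_ae (Eventually.of_forall fun θ => ?_)
    simp only [mul_sub, Finset.mul_sum, mul_assoc]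
  rw [key, Real.rpow_natCast, Real.norm_of_nonneg (pow_nonneg ht.1.le _)]
  have := norm_sphereIntegral_le (n := n) (C := C * (D * t ^ N)) (f := fun θ => w θ *
        (ψ (t • θ) - ∑ j ∈ Finset.range N, taylorHom n ψ j θ * (t : ℂ) ^ j)) fun θ hθ => by
    rw [norm_mul]
    exact mul_le_mul (hC θ hθ) (hD θ hθ t ⟨ht.1.le, ht.2.le⟩) (norm_nonneg _) hC0
  linarith

end

/-! ### Polar coordinates -/

/-- Integration in polar coordinates. -/
lemma integral_polar {n : ℕ} (hn : 1 ≤ n) {f : Euc n → ℂ} (hf : Integrable f) :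
    ∫ y, f y = ∫ r in Set.Ioi (0 : ℝ),
      ((r ^ (n - 1) : ℝ) : ℂ) * sphereIntegral n (fun θ => f (r • θ)) := by
  have : Nonempty (Fin n) := ⟨⟨0, hn⟩⟩
  have hdim : Module.finrank ℝ (Euc n) = n := by simp
  have hmp := (volume : Measure (Euc n)).measurePreserving_homeomorphUnitSphereProd
  have hemb := (homeomorphUnitSphereProd (Euc n)).measurableEmbedding
  rw [hdim] at hmp
  set g : Metric.sphere (0 : Euc n) 1 × Set.Ioi (0 : ℝ) → ℂ :=
    fun p => f ((p.2 : ℝ) • (p.1 : Euc n)) with hg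
  have hcomp : (g ∘ homeomorphUnitSphereProd (Euc n)) = fun y : ({0}ᶜ : Set (Euc n)) => f y := by
    ext y
    have hy : ‖(y : Euc n)‖ ≠ 0 := norm_ne_zero_iff.2 y.2
    simp [hg, smul_smul, hy]
  have hint : Integrable g ((volume : Measure (Euc n)).toSphere.prod
      (Measure.volumeIoiPow (n - 1))) := by
    rw [← hmp.integrable_comp_emb hemb, hcomp]
    have := (integrableOn_iff_comap_subtypeVal (f := f) (μ := volume)
      (measurableSet_singleton (0 : Euc n)).compl).1 hf.integrableOn
    exact this
  calc ∫ y, f y = ∫ y : ({0}ᶜ : Set (Euc n)), f y ∂((volume : Measure (Euc n)).comap (↑)) := by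
        rw [integral_subtype_comap (measurableSet_singleton _).compl f, restrict_compl_singleton]
    _ = ∫ p, g p ∂((volume : Measure (Euc n)).toSphere.prod (Measure.volumeIoiPow (n - 1))) := by
        rw [← hmp.integral_comp hemb g]
        exact congrArg _ hcomp.symm
    _ = ∫ r : Set.Ioi (0 : ℝ), sphereIntegral n (fun θ => f ((r : ℝ) • θ))
          ∂(Measure.volumeIoiPow (n - 1)) := integral_prod_symm g hint
    _ = _ := by
      simp only [Measure.volumeIoiPow, ENNReal.ofReal]
      rw [integral_withDensity_eq_integral_smul
          ((measurable_subtype_coe.pow_const _).real_toNNReal),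
        integral_subtype_comap measurableSet_Ioi fun a : ℝ =>
          Real.toNNReal (a ^ (n - 1)) • sphereIntegral n (fun θ => f (a • θ))]
      refine setIntegral_congr_fun measurableSet_Ioi fun x hx => ?_
      rw [NNReal.smul_def, Real.coe_toNNReal _ (pow_nonneg (le_of_lt hx) _), real_smul]

/-- Jacobian factor plus homogeneity exponent gives the Mellin kernel. -/
lemma cpow_mul_pow_pred {n : ℕ} (hn : 1 ≤ n) (a : ℂ) {r : ℝ} (hr : 0 < r) :
    ((r ^ (n - 1) : ℝ) : ℂ) * (r : ℂ) ^ a = (r : ℂ) ^ (a + n - 1) := by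
  have hr' : (r : ℂ) ≠ 0 := by exact_mod_cast hr.ne'
  rw [show a + n - 1 = ((n - 1 : ℕ) : ℂ) + a by push_cast [Nat.cast_sub hn]; ring,
    cpow_add _ _ hr', cpow_natCast, ofReal_pow]

section
variable {n : ℕ} {w : Euc n → ℂ}

/-- Absolute convergence for a single power of `log`: the angular factor is bounded and `ψ` has a
radial majorant, which reduces the claim to the convergence of a Mellin integral. -/
lemma term_integrable (hn : 1 ≤ n) (hw : ContinuousOn w {y : Euc n | y ≠ 0})
    (hhom : ∀ t : ℝ, 0 < t → ∀ y : Euc n, y ≠ 0 → w (t • y) = w y)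
    (ψ : SchwartzMap (Euc n) ℂ) (l : ℕ) {a : ℂ} (ha : -(n : ℝ) < a.re) :
    Integrable (fun y : Euc n => (‖y‖ : ℂ) ^ a * (Real.log ‖y‖ : ℂ) ^ l * w y * ψ y) := by
  have : Nonempty (Fin n) := ⟨⟨0, hn⟩⟩
  have hdim : Module.finrank ℝ (Euc n) = n := by simp
  obtain ⟨C, hC0, hC⟩ := sphere_bound hw
  -- a radial majorant of `ψ` decaying fast enough for the exponent at hand
  obtain ⟨K, hK⟩ := exists_nat_gt ((a + n).re + 1)
  obtain ⟨D, hD0, hD⟩ := ψ.decay K 0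
  set D' : ℝ := SchwartzMap.seminorm ℂ 0 0 ψ + D with hD'
  have hD'0 : 0 ≤ D' := add_nonneg (apply_nonneg _ _) hD0.le
  set h : ℝ → ℂ := fun r => ((D' / (1 + |r| ^ K) : ℝ) : ℂ) with hh
  have hden : ∀ r : ℝ, 0 < 1 + |r| ^ K := fun r => by positivity
  have hψ : ∀ y : Euc n, ‖ψ y‖ ≤ ‖h ‖y‖‖ := by
    intro y
    rw [hh, norm_real, Real.norm_of_nonneg (div_nonneg hD'0 (hden _).le), abs_norm,
      le_div_iff₀ (by positivity), mul_add, mul_one, hD', mul_comm]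
    refine add_le_add (SchwartzMap.norm_le_seminorm ℂ ψ y) ?_
    simpa using hD y
  have hcont : Continuous h := by
    refine continuous_ofReal.comp (continuous_const.div (by fun_prop) fun r => (hden r).ne')
  have htop : h =O[atTop] (fun t : ℝ => t ^ (-(K : ℝ))) := by
    refine Asymptotics.IsBigO.of_bound D' ?_
    filter_upwards [eventually_gt_atTop 0] with t ht
    rw [hh, norm_real, Real.norm_of_nonneg (div_nonneg hD'0 (hden _).le),
      Real.norm_of_nonneg (Real.rpow_nonneg ht.le _), Real.rpow_neg ht.le, Real.rpow_natCast,
      abs_of_pos ht, ← div_eq_mul_inv]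
    exact div_le_div_of_nonneg_left hD'0 (pow_pos ht _) (by linarith)
  have hbot : h =O[nhdsWithin 0 (Set.Ioi 0)] (fun t : ℝ => t ^ (-(0 : ℝ))) := by
    refine Asymptotics.IsBigO.of_bound D' (Eventually.of_forall fun t => ?_)
    rw [hh, norm_real, Real.norm_of_nonneg (div_nonneg hD'0 (hden _).le)]
    simp only [neg_zero, Real.rpow_zero, norm_one, mul_one]
    exact div_le_self hD'0 (by linarith [pow_nonneg (abs_nonneg t) K])
  have hs : 0 < (a + n).re := by simp; linarith
  have hmel : MellinConvergent (fun t : ℝ => (Real.log t : ℂ) ^ l * h t) (a + n) :=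
    mellinConvergent_of_isBigO_rpow
      (locallyIntegrableOn_log_pow l (hcont.locallyIntegrable.locallyIntegrableOn _))
      (isBigO_top_log_pow l (b := (a + n).re + 1) hK htop) (lt_add_one _)
      (isBigO_zero_log_pow l (b := (a + n).re / 2) (by linarith) hbot) (by linarith)
  have hrad : Integrable (fun y : Euc n =>
      C * ‖(‖y‖ : ℂ) ^ a * ((Real.log ‖y‖ : ℂ) ^ l * h ‖y‖)‖) := by
    refine Integrable.const_mul ?_ C
    refine (integrable_fun_norm_addHaar (volume : Measure (Euc n))
      (f := fun r : ℝ => ‖(r : ℂ) ^ a * ((Real.log r : ℂ) ^ l * h r)‖)).2 ?_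
    refine IntegrableOn.congr_fun hmel.norm (fun r hr => ?_) measurableSet_Ioi
    simp only
    rw [hdim, smul_eq_mul, smul_eq_mul, ← cpow_mul_pow_pred hn a hr, mul_assoc, norm_mul _ (_ * _),
      norm_real, Real.norm_of_nonneg (pow_nonneg (le_of_lt hr) _)]
  -- the integrand is continuous away from the origin, a null set
  have hmeas : AEStronglyMeasurable
      (fun y : Euc n => (‖y‖ : ℂ) ^ a * (Real.log ‖y‖ : ℂ) ^ l * w y * ψ y) volume := by
    rw [← restrict_compl_singleton (μ := (volume : Measure (Euc n))) 0]
    refine ContinuousOn.aestronglyMeasurable ?_ (measurableSet_singleton _).compl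
    refine ((ContinuousOn.mul ?_ ?_).mul hw).mul ψ.continuous.continuousOn
    · intro y hy
      have : (‖y‖ : ℂ) ∈ slitPlane := by
        rw [ofReal_mem_slitPlane]; exact norm_pos_iff.2 hy
      exact ((continuous_ofReal.comp continuous_norm).continuousAt.cpow continuousAt_const
        this).continuousWithinAt
    · exact (continuous_ofReal.comp_continuousOn
        (continuous_norm.continuousOn.log fun y hy => norm_ne_zero_iff.2 hy)).pow _
  refine hrad.mono' hmeas ?_
  filter_upwards [compl_mem_ae_iff.2 (measure_singleton (0 : Euc n))] with y hy
  have hy0 : 0 < ‖y‖ := norm_pos_iff.2 hy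
  have hwy : ‖w y‖ ≤ C := by
    rw [← hhom ‖y‖⁻¹ (inv_pos.2 hy0) y hy]
    exact hC _ (by rw [norm_smul, norm_inv, norm_norm, inv_mul_cancel₀ hy0.ne'])
  rw [norm_mul, norm_mul, mul_comm _ ‖w y‖, norm_mul _ (_ * h _), norm_mul _ (h _), mul_assoc,
    norm_mul, mul_assoc]
  gcongr
  exact hψ y

/-- In polar coordinates the contribution of a single power of `log` is a Mellin transform of the
spherical mean, at `a + n`. -/
lemma term_integral (hn : 1 ≤ n) (hw : ContinuousOn w {y : Euc n | y ≠ 0})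
    (hhom : ∀ t : ℝ, 0 < t → ∀ y : Euc n, y ≠ 0 → w (t • y) = w y)
    (ψ : SchwartzMap (Euc n) ℂ) (l : ℕ) {a : ℂ} (ha : -(n : ℝ) < a.re) :
    ∫ y : Euc n, (‖y‖ : ℂ) ^ a * (Real.log ‖y‖ : ℂ) ^ l * w y * ψ y
      = mellin (fun t : ℝ => (Real.log t : ℂ) ^ l * sphMean n w ψ t) (a + n) := by
  rw [integral_polar hn (term_integrable hn hw hhom ψ l ha), mellin]
  refine setIntegral_congr_fun measurableSet_Ioi fun r hr => ?_
  have hr0 : 0 < r := hr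
  rw [← cpow_mul_pow_pred hn a hr0, smul_eq_mul, mul_assoc]
  congr 1
  rw [← mul_assoc]
  unfold sphMean sphereIntegral
  rw [← integral_const_mul]
  refine integral_congr_ae (Eventually.of_forall fun θ => ?_)
  simp only
  rw [hhom r hr0 θ (ne_zero_of_mem_unit_sphere θ), norm_smul, norm_eq_of_mem_sphere, mul_one,
    Real.norm_of_nonneg hr0.le]
  ring

end

/-! ### Meromorphic continuation -/

/-- For a log-homogeneous `u` of order `(m,k)` and a Schwartz function `ψ`,
`F(z) = ∫ |y|^z u(y) ψ(y) dy` converges absolutely for `Re z > -n - Re m` and extends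
meromorphically to `ℂ`, holomorphic outside `{-m-n-j : j ∈ ℕ}`, with at each point
`-m-n-j` a pole of order at most `k+1` whose polar part is
`∑_{l≤k} (-1)^l l! c_{j,l} (z+m+n+j)^{-(l+1)}` where
`c_{j,l} = ∑_{|α|=j} (∂^α ψ(0)/α!) ∫_{S^{n-1}} u_l(θ) θ^α dθ`. -/
theorem statement1 (n : ℕ) (hn : 1 ≤ n) (m : ℂ) (k : ℕ)
    (u : Euc n → ℂ) (ul : Fin (k + 1) → Euc n → ℂ)
    (hu : IsLogHomFunWith n m k u ul)
    (ψ : SchwartzMap (Euc n) ℂ) :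
    (∀ z : ℂ, -(n : ℝ) - m.re < z.re →
      Integrable (fun y : Euc n => (‖y‖ : ℂ) ^ z * u y * ψ y)) ∧
    ∃ G : ℂ → ℂ,
      (∀ z : ℂ, -(n : ℝ) - m.re < z.re →
        G z = ∫ y : Euc n, (‖y‖ : ℂ) ^ z * u y * ψ y) ∧
      (∀ z : ℂ, MeromorphicAt G z) ∧
      (∀ z : ℂ, (∀ j : ℕ, z ≠ -m - (n : ℂ) - (j : ℂ)) → AnalyticAt ℂ G z) ∧
      (∀ j : ℕ, ∃ H : ℂ → ℂ, AnalyticAt ℂ H (-m - (n : ℂ) - (j : ℂ)) ∧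
        ∀ᶠ z in nhdsWithin (-m - (n : ℂ) - (j : ℂ)) {w : ℂ | w ≠ -m - (n : ℂ) - (j : ℂ)},
          G z = H z + ∑ l : Fin (k + 1),
            ((-1 : ℂ) ^ (l : ℕ) * (Nat.factorial l : ℂ) *
              ∑ α ∈ Finset.Nat.antidiagonalTuple n j,
                (multiDeriv n α (⇑ψ) 0 / (multiFact n α : ℂ)) *
                  sphereIntegral n (fun θ => ul l θ * multiPow n θ α)) *
            (z + m + (n : ℂ) + (j : ℂ)) ^ (-((l : ℕ) : ℤ) - 1)) := by
  obtain ⟨hsm, hhom, hform⟩ := hu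
  have hw : ∀ l, ContinuousOn (ul l) {y : Euc n | y ≠ 0} := fun l => (hsm l).continuousOn
  have hsum : ∀ z : ℂ, (fun y : Euc n => (‖y‖ : ℂ) ^ z * u y * ψ y) =ᵐ[volume]
      fun y : Euc n => ∑ l : Fin (k + 1),
        (‖y‖ : ℂ) ^ (z + m) * (Real.log ‖y‖ : ℂ) ^ (l : ℕ) * ul l y * ψ y := by
    intro z
    have : Nonempty (Fin n) := ⟨⟨0, hn⟩⟩
    filter_upwards [compl_mem_ae_iff.2 (measure_singleton (0 : Euc n))] with y hy
    have hy0 : (‖y‖ : ℂ) ≠ 0 := by exact_mod_cast norm_ne_zero_iff.2 hy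
    rw [hform y hy, cpow_add _ _ hy0, Finset.mul_sum, Finset.mul_sum, Finset.sum_mul]
    refine Finset.sum_congr rfl fun l _ => ?_
    ring
  have hre : ∀ z : ℂ, -(n : ℝ) - m.re < z.re → -(n : ℝ) < (z + m).re := by
    intro z hz
    rw [add_re]
    linarith
  refine ⟨fun z hz => (integrable_congr (hsum z)).2 (integrable_finsetSum _ fun l _ =>
    term_integrable hn (hw l) (hhom l) ψ l (hre z hz)), ?_⟩
  choose A hA0 hAan hApol using fun l : Fin (k + 1) =>
    mellin_continuation (sphMean n (ul l) ψ) (sphCoeff n (ul l) ψ) l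
      ((sphMean_continuous (hw l) ψ).locallyIntegrable.locallyIntegrableOn _)
      (sphMean_top (hw l) ψ) (sphMean_zero (hw l) ψ)
  have hshift : ∀ z : ℂ, AnalyticAt ℂ (fun z : ℂ => z + m + n) z := fun z =>
    (analyticAt_id.add analyticAt_const).add analyticAt_const
  have hG : ∀ z : ℂ, (∀ j : ℕ, z ≠ -m - (n : ℂ) - (j : ℂ)) →
      AnalyticAt ℂ (fun z => ∑ l, A l (z + m + n)) z := by
    intro z hz
    refine Finset.analyticAt_fun_sum _ fun l _ => ?_
    refine (hAan l (z + m + n) fun j hj => hz j ?_).comp (f := fun z : ℂ => z + m + n) (hshift z)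
    linear_combination hj
  have hpol : ∀ j : ℕ, ∃ H : ℂ → ℂ, AnalyticAt ℂ H (-m - (n : ℂ) - (j : ℂ)) ∧
      ∀ᶠ z in nhds (-m - (n : ℂ) - (j : ℂ)),
        ∑ l, A l (z + m + n) = H z + ∑ l : Fin (k + 1),
          ((-1 : ℂ) ^ (l : ℕ) * (Nat.factorial l : ℂ) * sphCoeff n (ul l) ψ j) *
            (z + m + (n : ℂ) + (j : ℂ)) ^ (-((l : ℕ) : ℤ) - 1) := by
    intro j
    choose H hHan hHev using fun l => hApol l j
    have hpt : -m - (n : ℂ) - (j : ℂ) + m + n = -(j : ℂ) := by ring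
    refine ⟨fun z => ∑ l, H l (z + m + n), ?_, ?_⟩
    · refine Finset.analyticAt_fun_sum _ fun l _ => ?_
      refine AnalyticAt.comp (f := fun z : ℂ => z + m + n) ?_ (hshift _)
      rw [hpt]
      exact hHan l
    · have htend : Tendsto (fun z : ℂ => z + m + n) (nhds (-m - (n : ℂ) - (j : ℂ)))
          (nhds (-(j : ℂ))) := by
        have := (hshift (-m - (n : ℂ) - (j : ℂ))).continuousAt.tendsto
        rwa [hpt] at this
      filter_upwards [htend.eventually (eventually_all.2 hHev)] with z hz
      rw [← Finset.sum_add_distrib]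
      exact Finset.sum_congr rfl fun l _ => hz l
  refine ⟨fun z => ∑ l, A l (z + m + n), fun z hz => ?_, fun z => ?_, hG, fun j => ?_⟩
  · rw [integral_congr_ae (hsum z), integral_finsetSum _ fun l _ =>
      term_integrable hn (hw l) (hhom l) ψ l (hre z hz)]
    refine Finset.sum_congr rfl fun l _ => ?_
    have hpos : 0 < (z + m + n).re := by
      have := hre z hz
      rw [add_re, natCast_re]
      linarith
    rw [term_integral hn (hw l) (hhom l) ψ l (hre z hz), hA0 l _ hpos]
  · by_cases hz : ∀ j : ℕ, z ≠ -m - (n : ℂ) - (j : ℂ)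
    · exact (hG z hz).meromorphicAt
    · push Not at hz
      obtain ⟨j, rfl⟩ := hz
      obtain ⟨H, hH, hev⟩ := hpol j
      have hmer : MeromorphicAt (fun z => H z + ∑ l : Fin (k + 1),
          ((-1 : ℂ) ^ (l : ℕ) * (Nat.factorial l : ℂ) * sphCoeff n (ul l) ψ j) *
            (z + m + (n : ℂ) + (j : ℂ)) ^ (-((l : ℕ) : ℤ) - 1)) (-m - (n : ℂ) - (j : ℂ)) := by
        refine hH.meromorphicAt.fun_add (MeromorphicAt.fun_sum fun l _ => ?_)
        exact analyticAt_const.meromorphicAt.fun_mul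
          (((hshift _).add analyticAt_const).meromorphicAt.fun_zpow _)
      refine hmer.congr ?_
      filter_upwards [mem_nhdsWithin_of_mem_nhds hev] with z hz using hz.symm
  · obtain ⟨H, hH, hev⟩ := hpol j
    exact ⟨H, hH, mem_nhdsWithin_of_mem_nhds hev⟩
end
end

section
/- Let n ≥ 1, m ∈ ℂ, k ∈ ℕ, and let U be a tempered distribution on ℝⁿ which is log-homogeneous of order (m,k) and is supported at the origin, in the sense that ⟨U, ψ⟩ = 0 for every Schwartz function ψ vanishing on a neighbourhood of 0. If m ∉ {−n−j : j ∈ ℕ}, then U = 0. -/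
/-!
Let `D ψ = ψ(e^{-δ} ·)` act on Schwartz functions, for a small `δ > 0`. Two polynomials in `D` are
annihilated by `U`.

* Log-homogeneity says that `U (D^i ψ) = μ^i P_ψ(i)` with `μ = e^{δ(n+m)}` and `P_ψ` a polynomial of
  degree at most `k`. Since the `(k+1)`-st finite difference of `P_ψ` vanishes,
  `U ((D - μ)^{k+1} ψ) = 0` for all `ψ` (`apply_sub_pow`).
* If the derivatives of `ψ` of order `< N` vanish at `0`, the support condition and the continuity of
  `U` give `U (ψ(e^{-τ} ·)) = O(e^{-τN})` as `τ → ∞` (`decay_of_support`). For `N > -(n + Re m)` this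
  is compatible with log-homogeneity only if `U ψ = 0` (`eq_zero_of_jet_zero`). As `D` multiplies
  the `l`-th derivative at `0` by `e^{-δl}`, the operator `∏_{l<N} (D - e^{-δl})` kills the jet of
  order `< N` at `0`, so that `U (∏_{l<N} (D - e^{-δl}) ψ) = 0` for all `ψ`.

Because `m` is not of the form `-n-j` and `δ` is small, `μ ≠ e^{-δl}` for all `l` (`exp_ne_exp`). The
two polynomials are therefore coprime, and Bézout's identity writes every `ψ` as a sum of two
functions annihilated by `U`.
-/

open MeasureTheory Complex Filter

noncomputable section

open scoped SchwartzMap ContDiff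
open Polynomial

/-! ### Dilations -/

/-- The dilation `D_τ : ψ ↦ ψ(e^{-τ} ·)`, as a linear endomorphism of the Schwartz space, so that
polynomials in it make sense. The exponential parameter makes `D` additive in `τ`, and turns
`log t` into `τ` in the definition of log-homogeneity. -/
def dil (n : ℕ) (τ : ℝ) : Module.End ℂ (SchwartzMap (Euc n) ℂ) :=
  (SchwartzMap.compCLMOfContinuousLinearEquiv ℂ
    (ContinuousLinearEquiv.smulLeft (Units.mk0 (Real.exp (-τ)) (Real.exp_ne_zero _)) :
      Euc n ≃L[ℝ] Euc n)).toLinearMap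

lemma dil_apply (n : ℕ) (τ : ℝ) (ψ : SchwartzMap (Euc n) ℂ) (y : Euc n) :
    dil n τ ψ y = ψ (Real.exp (-τ) • y) := rfl

lemma dil_pow_apply (n : ℕ) (τ : ℝ) (i : ℕ) (ψ : SchwartzMap (Euc n) ℂ) :
    (dil n τ ^ i) ψ = dil n (i * τ) ψ := by
  induction i generalizing ψ with
  | zero => ext y; simp [dil_apply]
  | succ i ih =>
    ext y
    rw [pow_succ, Module.End.mul_apply, ih, dil_apply, dil_apply, dil_apply, smul_smul,
      ← Real.exp_add]
    congr 3
    push_cast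
    ring

lemma iteratedFDeriv_dil (n : ℕ) (τ : ℝ) (l : ℕ) (ψ : SchwartzMap (Euc n) ℂ) (y : Euc n) :
    iteratedFDeriv ℝ l (dil n τ ψ) y
      = Real.exp (-τ) ^ l • iteratedFDeriv ℝ l ψ (Real.exp (-τ) • y) :=
  congrFun (iteratedFDeriv_comp_const_smul (i := l) (Real.exp (-τ)) (ψ.smooth l)) y

/-- Log-homogeneity in additive form, with `t = e^τ`: along the dilations, `U` is an exponential
times a polynomial in `τ`. -/
lemma logHom_dil {n : ℕ} {m : ℂ} {k : ℕ} {U : TempDist n} {Uj : Fin (k + 1) → TempDist n}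
    (h : IsLogHomDistWith n m k U Uj) (ψ : SchwartzMap (Euc n) ℂ) (τ : ℝ) :
    U (dil n τ ψ) = cexp (τ * (n + m)) *
      (∑ j : Fin (k + 1), C (Uj j ψ) * X ^ (j : ℕ) : ℂ[X]).eval (τ : ℂ) := by
  have h1 := h (Real.exp τ) (Real.exp_pos τ) ψ (((Real.exp τ ^ n)⁻¹ : ℝ) • dil n τ ψ)
    (fun y => by rw [smul_apply, dil_apply, Real.exp_neg])
  have h2 : ((Real.exp τ : ℝ) : ℂ) ^ m = cexp (τ * m) := by
    rw [cpow_def_of_ne_zero (by simp), ← ofReal_log (Real.exp_pos τ).le, Real.log_exp]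
  rw [h2, Real.log_exp, ← Complex.coe_smul, map_smul, smul_eq_mul] at h1
  have h3 : cexp (τ * (n + m)) = cexp τ ^ n * cexp (τ * m) := by
    rw [← Complex.exp_nat_mul, ← Complex.exp_add]; ring_nf
  have h4 : ((((Real.exp τ) ^ n)⁻¹ : ℝ) : ℂ) = (cexp τ ^ n)⁻¹ := by push_cast; rfl
  have h5 : cexp τ ^ n ≠ 0 := pow_ne_zero _ (Complex.exp_ne_zero _)
  rw [h4, inv_mul_eq_iff_eq_mul₀ h5] at h1
  rw [h1, h3, mul_assoc, eval_finsetSum]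
  congr 2
  refine Finset.sum_congr rfl fun j _ => ?_
  rw [eval_mul, eval_C, eval_pow, eval_X, mul_comm]

/-! ### Decay along dilations for functions with vanishing jet at the origin -/

/-- If the `(N-1)`-jet of `ψ` at `0` vanishes then `D^{N-d}ψ` is `O(‖y‖^d)` on the whole space, by
integrating down from the bounded derivative `D^N ψ`. -/
lemma taylor_bound {n : ℕ} (ψ : SchwartzMap (Euc n) ℂ) (N : ℕ)
    (h0 : ∀ l < N, iteratedFDeriv ℝ l ψ 0 = 0) (d : ℕ) :
    ∀ l, l + d = N → ∃ C : ℝ, 0 ≤ C ∧ ∀ y, ‖iteratedFDeriv ℝ l ψ y‖ ≤ C * ‖y‖ ^ d := by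
  induction d with
  | zero =>
    intro l _
    exact ⟨SchwartzMap.seminorm ℝ 0 l ψ, apply_nonneg _ _, fun y => by
      simpa using SchwartzMap.norm_iteratedFDeriv_le_seminorm ℝ ψ l y⟩
  | succ d ih =>
    intro l hl
    obtain ⟨C, hC, hb⟩ := ih (l + 1) (by omega)
    refine ⟨C, hC, fun y => ?_⟩
    have := (convex_closedBall (0 : Euc n) ‖y‖).norm_image_sub_le_of_norm_fderiv_le (𝕜 := ℝ)
      (f := iteratedFDeriv ℝ l ψ) (C := C * ‖y‖ ^ d) (x := 0) (y := y)
      (fun x _ => ((ψ.smooth (l + 1)).differentiable_iteratedFDeriv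
        (by exact_mod_cast Nat.lt_succ_self l)) x)
      (fun x hx => by
        rw [norm_fderiv_iteratedFDeriv]
        refine (hb x).trans ?_
        have : ‖x‖ ≤ ‖y‖ := by simpa using hx
        gcongr)
      (by simp) (by simp)
    rw [h0 l (by omega), sub_zero, sub_zero] at this
    rw [pow_succ, ← mul_assoc]
    exact this

/-- If the `(N-1)`-jet of `ψ` at `0` vanishes, every derivative of the stretched function
`ψ(e^{-τ} ·)` is `O(e^{-τN})`, with polynomial growth in space. Orders `l ≤ N` use the Taylor bound;
for `l > N` the chain rule alone gives the factor `e^{-τl} ≤ e^{-τN}`. -/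
lemma dil_deriv_bound {n : ℕ} (ψ : SchwartzMap (Euc n) ℂ) (N : ℕ)
    (h0 : ∀ l < N, iteratedFDeriv ℝ l ψ 0 = 0) (l : ℕ) :
    ∃ C : ℝ, 0 ≤ C ∧ ∀ τ : ℝ, 0 ≤ τ → ∀ y,
      ‖iteratedFDeriv ℝ l (dil n τ ψ) y‖ ≤ C * Real.exp (-τ) ^ N * (1 + ‖y‖) ^ N := by
  rcases le_total l N with hl | hl
  · obtain ⟨C, hC, hb⟩ := taylor_bound ψ N h0 (N - l) l (by omega)
    refine ⟨C, hC, fun τ _ y => ?_⟩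
    have hs := Real.exp_pos (-τ)
    rw [iteratedFDeriv_dil, norm_smul, Real.norm_of_nonneg (by positivity)]
    calc _ ≤ Real.exp (-τ) ^ l * (C * ‖Real.exp (-τ) • y‖ ^ (N - l)) := by gcongr; exact hb _
      _ = C * (Real.exp (-τ) ^ l * Real.exp (-τ) ^ (N - l)) * ‖y‖ ^ (N - l) := by
        rw [norm_smul, Real.norm_of_nonneg hs.le]; ring
      _ = C * Real.exp (-τ) ^ N * ‖y‖ ^ (N - l) := by rw [← pow_add]; congr 3; omega
      _ ≤ _ := by
        gcongr
        calc ‖y‖ ^ (N - l) ≤ (1 + ‖y‖) ^ (N - l) := by gcongr; linarith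
          _ ≤ _ := pow_le_pow_right₀ (by linarith [norm_nonneg y]) (by omega)
  · refine ⟨SchwartzMap.seminorm ℝ 0 l ψ, apply_nonneg _ _, fun τ hτ y => ?_⟩
    have hs := Real.exp_pos (-τ)
    rw [iteratedFDeriv_dil, norm_smul, Real.norm_of_nonneg (by positivity)]
    calc _ ≤ Real.exp (-τ) ^ N * SchwartzMap.seminorm ℝ 0 l ψ :=
          mul_le_mul (pow_le_pow_of_le_one hs.le (Real.exp_le_one_iff.2 (by linarith)) hl)
            (SchwartzMap.norm_iteratedFDeriv_le_seminorm ℝ ψ l _) (norm_nonneg _) (by positivity)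
      _ = SchwartzMap.seminorm ℝ 0 l ψ * Real.exp (-τ) ^ N * 1 := by ring
      _ ≤ _ := by
        have := apply_nonneg (SchwartzMap.seminorm ℝ 0 l) ψ
        gcongr
        exact one_le_pow₀ (by linarith [norm_nonneg y])

/-- Multiplication by a Schwartz function `χ` absorbs the polynomial growth in `dil_deriv_bound`, so
each Schwartz seminorm of `χ · ψ(e^{-τ} ·)` is `O(e^{-τN})`. -/
lemma seminorm_cutoff_dil_bound {n : ℕ} (χ ψ : SchwartzMap (Euc n) ℂ) (N : ℕ)
    (h0 : ∀ l < N, iteratedFDeriv ℝ l ψ 0 = 0) (a b : ℕ) :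
    ∃ C : ℝ, 0 ≤ C ∧ ∀ τ : ℝ, 0 ≤ τ →
      SchwartzMap.seminorm ℂ a b (SchwartzMap.smulLeftCLM ℂ χ (dil n τ ψ))
        ≤ C * Real.exp (-τ) ^ N := by
  choose C hC hb using dil_deriv_bound ψ N h0
  have hχ (i : ℕ) : ∃ B : ℝ, 0 ≤ B ∧ ∀ x,
      ‖x‖ ^ a * (1 + ‖x‖) ^ N * ‖iteratedFDeriv ℝ i χ x‖ ≤ B := by
    refine ⟨_, by positivity, fun x => le_trans ?_ (SchwartzMap.one_add_le_sup_seminorm_apply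
      (𝕜 := ℝ) (m := (a + N, i)) le_rfl le_rfl χ x)⟩
    rw [pow_add]
    gcongr
    linarith
  choose B hB hBb using hχ
  refine ⟨∑ i ∈ Finset.range (b + 1), (b.choose i : ℝ) * B i * C (b - i),
    Finset.sum_nonneg fun i _ => mul_nonneg (mul_nonneg (by positivity) (hB i)) (hC _),
    fun τ hτ => ?_⟩
  refine SchwartzMap.seminorm_le_bound ℂ a b _ (mul_nonneg (Finset.sum_nonneg fun i _ =>
    mul_nonneg (mul_nonneg (by positivity) (hB i)) (hC _)) (by positivity)) fun x => ?_
  rw [SchwartzMap.smulLeftCLM_apply χ.hasTemperateGrowth]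
  refine (mul_le_mul_of_nonneg_left (norm_iteratedFDeriv_smul_le (χ.smooth b)
    ((dil n τ ψ).smooth b) x le_rfl) (by positivity)).trans ?_
  rw [Finset.mul_sum, Finset.sum_mul]
  refine Finset.sum_le_sum fun i _ => ?_
  calc _ ≤ ‖x‖ ^ a * ((b.choose i : ℝ) * ‖iteratedFDeriv ℝ i χ x‖ *
          (C (b - i) * Real.exp (-τ) ^ N * (1 + ‖x‖) ^ N)) := by gcongr; exact hb _ τ hτ x
    _ = (b.choose i : ℝ) * (‖x‖ ^ a * (1 + ‖x‖) ^ N * ‖iteratedFDeriv ℝ i χ x‖) *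
          C (b - i) * Real.exp (-τ) ^ N := by ring
    _ ≤ _ := by
      have := hC (b - i)
      gcongr
      exact hBb i x

/-- A distribution supported at `0` decays like `e^{-τN}` along the dilates of a function whose
`(N-1)`-jet at `0` vanishes: the dilates may first be cut off near `0`. -/
lemma decay_of_support {n : ℕ} (U : TempDist n)
    (hsupp : ∀ ψ : SchwartzMap (Euc n) ℂ, (∀ᶠ y in nhds (0 : Euc n), ψ y = 0) → U ψ = 0)
    (ψ : SchwartzMap (Euc n) ℂ) (N : ℕ) (h0 : ∀ l < N, iteratedFDeriv ℝ l ψ 0 = 0) :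
    ∃ C : ℝ, 0 ≤ C ∧ ∀ τ : ℝ, 0 ≤ τ → ‖U (dil n τ ψ)‖ ≤ C * Real.exp (-τ) ^ N := by
  let f : ContDiffBump (0 : Euc n) := ⟨1, 2, one_pos, one_lt_two⟩
  let χ : SchwartzMap (Euc n) ℂ := HasCompactSupport.toSchwartzMap
    (f := fun x => ((f x : ℝ) : ℂ)) (f.hasCompactSupport.comp_left (g := ((↑) : ℝ → ℂ)) rfl)
    (Complex.ofRealCLM.contDiff.comp f.contDiff)
  -- `φ - χ φ` vanishes on the unit ball, where `χ = 1`.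
  have hcut (φ : SchwartzMap (Euc n) ℂ) : U φ = U (SchwartzMap.smulLeftCLM ℂ χ φ) := by
    rw [← sub_eq_zero, ← map_sub]
    apply hsupp
    filter_upwards [f.eventuallyEq_one] with y hy
    have : χ y = 1 := by change ((f y : ℝ) : ℂ) = 1; rw [hy]; simp
    rw [sub_apply, SchwartzMap.smulLeftCLM_apply_apply χ.hasTemperateGrowth, this]
    simp
  obtain ⟨S, K, -, hK⟩ := Seminorm.bound_of_continuous
    (schwartz_withSeminorms ℂ (Euc n) ℂ) ((normSeminorm ℂ ℂ).comp U.toLinearMap)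
    (continuous_norm.comp U.continuous)
  choose C hC hb using fun p : ℕ × ℕ => seminorm_cutoff_dil_bound χ ψ N h0 p.1 p.2
  have hS : 0 ≤ ∑ p ∈ S, C p := Finset.sum_nonneg fun p _ => hC p
  refine ⟨K * ∑ p ∈ S, C p, by positivity, fun τ hτ => ?_⟩
  rw [hcut, mul_assoc]
  refine (hK _).trans ?_
  change (K : ℝ) * _ ≤ _
  gcongr
  refine Seminorm.finset_sup_apply_le (by positivity) fun p hp => (hb p τ hτ).trans ?_
  gcongr
  exact Finset.single_le_sum (fun p _ => hC p) hp

/-! ### Functions with vanishing jet are annihilated -/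

lemma polynomial_eval_zero_of_tendsto (P : ℂ[X])
    (h : Tendsto (fun τ : ℝ => P.eval (τ : ℂ)) atTop (nhds 0)) : P.eval 0 = 0 := by
  by_cases hP : 0 < P.degree
  · have h1 := P.tendsto_norm_atTop hP (l := atTop) (z := fun τ : ℝ => (τ : ℂ))
      (by simpa using tendsto_abs_atTop_atTop (G := ℝ))
    exact absurd h.norm (not_tendsto_nhds_of_tendsto_atTop h1 _)
  · rw [eq_C_of_degree_le_zero (not_lt.1 hP)] at h ⊢
    simpa using h

/-- `U` kills every function whose jet at `0` vanishes to an order `N` with `N + n + Re m > 0`: the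
decay of `U (D_τ ψ) = e^{τ(n+m)} P(τ)` forces `P(τ) → 0`, hence `P(0) = U ψ = 0`. -/
lemma eq_zero_of_jet_zero {n : ℕ} {m : ℂ} {k : ℕ} {U : TempDist n}
    {Uj : Fin (k + 1) → TempDist n} (hU : IsLogHomDistWith n m k U Uj)
    (hsupp : ∀ ψ : SchwartzMap (Euc n) ℂ, (∀ᶠ y in nhds (0 : Euc n), ψ y = 0) → U ψ = 0)
    {N : ℕ} (hN : 0 < N + (n + m.re)) (ψ : SchwartzMap (Euc n) ℂ)
    (h0 : ∀ l < N, iteratedFDeriv ℝ l ψ 0 = 0) : U ψ = 0 := by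
  obtain ⟨C, -, hb⟩ := decay_of_support U hsupp ψ N h0
  have h1 := logHom_dil hU ψ
  set P : ℂ[X] := ∑ j : Fin (k + 1), Polynomial.C (Uj j ψ) * X ^ (j : ℕ)
  have hd : dil n 0 ψ = ψ := by ext y; simp [dil_apply]
  have h2 := h1 0
  rw [hd] at h2
  rw [h2]
  simp only [ofReal_zero, zero_mul, Complex.exp_zero, one_mul]
  apply polynomial_eval_zero_of_tendsto
  have hlim : Tendsto (fun τ : ℝ => C * Real.exp (-(τ * (N + (n + m.re))))) atTop (nhds 0) := by
    simpa using (Real.tendsto_exp_neg_atTop_nhds_zero.comp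
      (tendsto_id.atTop_mul_const hN)).const_mul C
  refine squeeze_zero_norm' ?_ hlim
  filter_upwards [eventually_ge_atTop 0] with τ hτ
  have h3 := hb τ hτ
  rw [h1 τ, norm_mul, Complex.norm_exp, ← Real.exp_nat_mul] at h3
  have h4 : ((τ : ℂ) * (n + m)).re = τ * (n + m.re) := by simp
  rw [h4] at h3
  have h5 : Real.exp (-(τ * (N + (n + m.re))))
      = Real.exp (N * -τ) / Real.exp (τ * (n + m.re)) := by
    rw [← Real.exp_sub]; ring_nf
  rw [h5, ← mul_div_assoc, le_div_iff₀ (Real.exp_pos _), mul_comm]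
  exact h3

/-! ### Polynomials in a dilation -/

/-- If `L` takes the values `μ^i P(i)` on the orbit `T^i ψ`, then applying `(T - μ)^r` to `ψ` amounts
to taking the `r`-th forward difference of `P`. -/
lemma apply_sub_pow {E : Type*} [AddCommGroup E] [Module ℂ E] (L : E →ₗ[ℂ] ℂ)
    (T : Module.End ℂ E) (μ : ℂ) (ψ : E) (P : ℂ[X])
    (h : ∀ i : ℕ, L ((T ^ i) ψ) = μ ^ i * P.eval (i : ℂ)) (r i : ℕ) :
    L ((T ^ i) (aeval T ((X - C μ) ^ r) ψ)) = μ ^ (i + r) * (fwdDiff 1)^[r] P.eval (i : ℂ) := by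
  induction r generalizing i with
  | zero => simpa using h i
  | succ r ih =>
    have h1 : (T ^ i) (aeval T ((X - C μ) ^ (r + 1)) ψ)
        = (T ^ (i + 1)) (aeval T ((X - C μ) ^ r) ψ)
          - μ • (T ^ i) (aeval T ((X - C μ) ^ r) ψ) := by
      rw [pow_succ' (X - C μ), map_mul, Module.End.mul_apply, pow_succ T i, Module.End.mul_apply]
      simp [Algebra.algebraMap_eq_smul_one]
    rw [h1, map_sub, map_smul, ih, ih, Function.iterate_succ_apply', fwdDiff]
    push_cast
    rw [smul_eq_mul]
    ring

/-- Dilation by `e^{-δ}` multiplies the `l`-th derivative at `0` by `e^{-δl}`, so the product of the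
factors `D_δ - e^{-δl}`, `l < N`, kills the `(N-1)`-jet at `0`. -/
lemma jet_aeval_prod (n : ℕ) (δ : ℝ) (N l : ℕ) (hl : l < N) (ψ : SchwartzMap (Euc n) ℂ) :
    iteratedFDeriv ℝ l
      (aeval (dil n δ) (∏ i ∈ Finset.range N, (X - C (cexp (-(i * δ))) : ℂ[X])) ψ) 0 = 0 := by
  rw [← Finset.mul_prod_erase _ _ (Finset.mem_range.2 hl), map_mul, Module.End.mul_apply]
  set φ := aeval (dil n δ) (∏ i ∈ (Finset.range N).erase l, (X - C (cexp (-(i * δ))) : ℂ[X])) ψ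
  have h1 : aeval (dil n δ) (X - C (cexp (-(l * δ))) : ℂ[X]) φ
      = dil n δ φ - (Real.exp (-δ) ^ l) • φ := by
    have : cexp (-(l * δ)) = ((Real.exp (-δ) ^ l : ℝ) : ℂ) := by
      push_cast
      rw [← Complex.exp_nat_mul]; ring_nf
    rw [this, map_sub, aeval_X, aeval_C, LinearMap.sub_apply, Module.algebraMap_end_apply,
      Complex.coe_smul]
  have h2 : (⇑(dil n δ φ - (Real.exp (-δ) ^ l) • φ) : Euc n → ℂ)
      = ⇑(dil n δ φ) - (Real.exp (-δ) ^ l) • ⇑φ := rfl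
  have h3 : ContDiffAt ℝ l (Real.exp (-δ) ^ l • (φ : Euc n → ℂ)) 0 :=
    ContDiffAt.const_smul (Real.exp (-δ) ^ l) (φ.smooth l).contDiffAt
  rw [h1, h2, iteratedFDeriv_sub_apply ((dil n δ φ).smooth l).contDiffAt h3, iteratedFDeriv_dil, smul_zero,
    iteratedFDeriv_const_smul_apply (φ.smooth l).contDiffAt, sub_self]

/-- The only place where `m ∉ {-n-j}` enters. The bound on `δ` keeps both exponents in the strip
where `exp` is injective. -/
lemma exp_ne_exp {n : ℕ} {m : ℂ} (hm : ∀ j : ℕ, m ≠ -(n : ℂ) - (j : ℂ)) {δ : ℝ} (hδ : 0 < δ)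
    (hδm : δ * |m.im| < 1) (l : ℕ) : cexp (δ * (n + m)) ≠ cexp (-(l * δ)) := by
  intro h
  have h1 : |(δ * (n + m) : ℂ).im| < 1 := by simpa [abs_mul, abs_of_pos hδ] using hδm
  have h2 : (-(l * δ) : ℂ).im = 0 := by simp
  have hpi := Real.pi_gt_three
  have h3 := abs_lt.1 h1
  have h4 := exp_inj_of_neg_pi_lt_of_le_pi (by linarith) (by linarith) (by linarith)
    (by linarith) h
  have h5 : (δ : ℂ) * (n + m + l) = 0 := by linear_combination h4
  have h6 := (mul_eq_zero.1 h5).resolve_left (by exact_mod_cast hδ.ne')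
  exact hm l (by linear_combination h6)

/-- A tempered distribution on `ℝⁿ`, log-homogeneous of order `(m,k)` with
`m ∉ {-n-j : j ∈ ℕ}` and supported at the origin, vanishes. -/
theorem statement3 (n : ℕ) (hn : 1 ≤ n) (m : ℂ) (k : ℕ) (U : TempDist n)
    (hU : IsLogHomDist n m k U)
    (hsupp : ∀ ψ : SchwartzMap (Euc n) ℂ, (∀ᶠ y in nhds (0 : Euc n), ψ y = 0) → U ψ = 0)
    (hm : ∀ j : ℕ, m ≠ -(n : ℂ) - (j : ℂ)) :
    U = 0 := by
  obtain ⟨Uj, hUj⟩ := hU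
  obtain ⟨N, hN⟩ := exists_nat_gt (-(n + m.re))
  let δ : ℝ := 1 / (1 + |m.im|)
  have hδ : 0 < δ := by positivity
  have hδm : δ * |m.im| < 1 := by
    rw [one_div_mul_eq_div, div_lt_one (by positivity)]; linarith
  set μ := cexp (δ * (n + m)) with hμ
  let p : ℂ[X] := (X - C μ) ^ (k + 1)
  let q : ℂ[X] := ∏ i ∈ Finset.range N, (X - C (cexp (-(i * δ))))
  -- Log-homogeneity: the forward difference of order `k + 1` kills polynomials of degree `≤ k`.
  have hp (ψ) : U (aeval (dil n δ) p ψ) = 0 := by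
    set P : ℂ[X] := ∑ j : Fin (k + 1), C (Uj j ψ) * X ^ (j : ℕ) with hP
    have hdeg : (P.comp (C (δ : ℂ) * X)).natDegree < k + 1 := by
      refine Nat.lt_succ_of_le (natDegree_comp_le.trans ?_)
      have h1 : P.natDegree ≤ k := natDegree_sum_le_of_forall_le _ _ fun j _ =>
        (natDegree_C_mul_X_pow_le _ _).trans (by omega)
      have h2 : (C (δ : ℂ) * X).natDegree ≤ 1 := by
        simpa using natDegree_C_mul_X_pow_le (δ : ℂ) 1
      nlinarith
    have h := apply_sub_pow U.toLinearMap (dil n δ) μ ψ (P.comp (C (δ : ℂ) * X)) (fun i => by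
      rw [dil_pow_apply]
      refine (logHom_dil hUj ψ _).trans ?_
      rw [hμ, ← Complex.exp_nat_mul, eval_comp, ← hP]
      push_cast
      simp only [eval_mul, eval_C, eval_X]
      ring_nf) (k + 1) 0
    rw [fwdDiff_iter_eq_zero_of_degree_lt hdeg] at h
    simp only [pow_zero, Module.End.one_apply, Pi.zero_apply, mul_zero] at h
    exact h
  -- Support at the origin.
  have hq (ψ) : U (aeval (dil n δ) q ψ) = 0 :=
    eq_zero_of_jet_zero hUj hsupp (by linarith) _ fun l hl => jet_aeval_prod n δ N l hl ψ
  have hcop : IsCoprime p q := IsCoprime.pow_left <| IsCoprime.prod_right fun l _ =>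
    isCoprime_X_sub_C_of_isUnit_sub (sub_ne_zero.2 (exp_ne_exp hm hδ hδm l)).isUnit
  obtain ⟨a, b, hab⟩ := hcop
  ext ψ
  have h : aeval (dil n δ) p (aeval (dil n δ) a ψ) + aeval (dil n δ) q (aeval (dil n δ) b ψ)
      = ψ := by
    rw [← Module.End.mul_apply, ← Module.End.mul_apply, ← map_mul, ← map_mul,
      ← LinearMap.add_apply, ← map_add, mul_comm p, mul_comm q, hab]
    simp
  rw [← h, map_add, hp, hq]
  simp
end
end

section
/- Let n ≥ 1, p ∈ ℕ, k ∈ ℕ, and let U be a tempered distribution on ℝⁿ which is log-homogeneous of order (−n−p, k) and is supported at the origin, in the sense that ⟨U, ψ⟩ = 0 for every Schwartz function ψ vanishing on a neighbourhood of 0. Then U has parity (−1)^p, i.e. ⟨U, ψ(−·)⟩ = (−1)^p ⟨U, ψ⟩ for every Schwartz function ψ. -/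
/-!
A log-homogeneous distribution supported at the origin is forced to be a genuinely homogeneous one,
and its parity can be read off from the function `f(s) = ⟨U, ψ(s ·)⟩`.

Because `U` is supported at `0`, test functions may be multiplied by a fixed cutoff, so that any
smooth function can be paired with `U`. Pairing `U` with the Taylor expansion of `ψ` gives
`f(s) = ∑_{j ≤ p} a_j s ^ j + O(|s| ^ (p + 1))` for `|s| ≤ 1`, with the same coefficients `a_j` for
both signs of `s` (`exists_dilate_expansion`). On the other hand, log-homogeneity says that for
`s > 0`, `f(s) = s ^ p P(log s)` with `P` a polynomial. Comparing the two as `s → 0⁺` shows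
that `P` is the constant `a_p`, hence `⟨U, ψ⟩ = a_p` (`logHom_eq_coeff`). Applied to the reflected
function `ψ(-·)`, whose expansion is that of `f(-s)`, the same comparison gives
`⟨U, ψ(-·)⟩ = (-1) ^ p a_p`.
-/

open MeasureTheory Complex Filter

noncomputable section

/-! ### Taylor polynomials of smooth functions -/

section Taylor

open scoped ContDiff Topology SchwartzMap

/-- Symmetry of higher derivatives for smooth, not necessarily analytic, functions. Permutations
are generated by adjacent transpositions; the one exchanging the first two slots is the symmetry
of a second derivative, and the others act inside a derivative of lower order. -/
theorem iteratedFDeriv_perm_of_smooth {E F : Type*} [NormedAddCommGroup E] [NormedSpace ℝ E]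
    [NormedAddCommGroup F] [NormedSpace ℝ F] {f : E → F} (hf : ContDiff ℝ ∞ f) (n : ℕ) :
    ∀ (x : E) (v : Fin n → E) (σ : Equiv.Perm (Fin n)),
      iteratedFDeriv ℝ n f x (v ∘ σ) = iteratedFDeriv ℝ n f x v := by
  have hd : ∀ m : ℕ, Differentiable ℝ (iteratedFDeriv ℝ m f) := fun m =>
    hf.differentiable_iteratedFDeriv (by exact_mod_cast WithTop.coe_lt_top (α := ℕ) m)
  have hsucc : ∀ (m : ℕ) (x : E) (v : Fin (m + 1) → E), iteratedFDeriv ℝ (m + 1) f x v =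
      fderiv ℝ (fun y => iteratedFDeriv ℝ m f y (Fin.tail v)) x (v 0) := by
    intro m x v
    rw [iteratedFDeriv_succ_apply_left,
      fderiv_continuousMultilinear_apply_const_apply (hd m x)]
  have hle : ∀ m : ℕ, (2 : ℕ∞ω) + (m : ℕ∞ω) ≤ ∞ := by
    intro m
    have h : ((2 + m : ℕ) : ℕ∞ω) ≤ ∞ :=
      WithTop.coe_le_coe.2 (le_top : ((2 + m : ℕ) : ℕ∞) ≤ ⊤)
    exact_mod_cast h
  induction n with
  | zero => intro x v σ; congr 1; exact Subsingleton.elim _ _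
  | succ n ih =>
    intro x v σ
    have hσ : σ ∈ Submonoid.closure
        (Set.range fun i : Fin n => Equiv.swap i.castSucc i.succ) := by
      rw [Equiv.Perm.mclosure_swap_castSucc_succ]; trivial
    induction hσ using Submonoid.closure_induction generalizing v with
    | one => rfl
    | mul a b _ _ ha hb =>
      rw [Equiv.Perm.coe_mul, ← Function.comp_assoc, hb, ha]
    | mem τ hτ =>
      obtain ⟨i, rfl⟩ := hτ
      obtain _ | n := n
      · exact i.elim0
      refine Fin.cases ?_ (fun j => ?_) i
      · have hsucc2 : ∀ w : Fin (n + 2) → E, iteratedFDeriv ℝ (n + 2) f x w =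
            fderiv ℝ (fderiv ℝ (iteratedFDeriv ℝ n f)) x (w 0) (w 1)
              (Fin.tail (Fin.tail w)) := by
          intro w
          have hdd : Differentiable ℝ (fderiv ℝ (iteratedFDeriv ℝ n f)) := by
            have : ContDiff ℝ 2 (iteratedFDeriv ℝ n f) :=
              hf.iteratedFDeriv_right (hle n)
            exact (this.fderiv_right (m := 1) (by norm_num)).differentiable (by norm_num)
          rw [hsucc]
          simp only [iteratedFDeriv_succ_apply_left]
          rw [fderiv_continuousMultilinear_apply_const_apply
            ((hdd x).clm_apply (differentiableAt_const _))]
          rw [fderiv_clm_apply (hdd x) (differentiableAt_const _)]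
          simp [Fin.tail]
        rw [hsucc2, hsucc2]
        have hs : IsSymmSndFDerivAt ℝ (iteratedFDeriv ℝ n f) x := by
          have : ContDiff ℝ 2 (iteratedFDeriv ℝ n f) :=
            hf.iteratedFDeriv_right (hle n)
          exact this.contDiffAt.isSymmSndFDerivAt (by simp)
        have h1 : (v ∘ Equiv.swap (0 : Fin (n + 1)).castSucc (0 : Fin (n + 1)).succ) 0 = v 1 := by
          simp
        have h2 : (v ∘ Equiv.swap (0 : Fin (n + 1)).castSucc (0 : Fin (n + 1)).succ) 1 = v 0 := by
          simp
        have h3 : Fin.tail (Fin.tail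
            (v ∘ Equiv.swap (0 : Fin (n + 1)).castSucc (0 : Fin (n + 1)).succ)) =
            Fin.tail (Fin.tail v) := by
          funext k
          simp only [Fin.tail, Function.comp]
          rw [Equiv.swap_apply_of_ne_of_ne] <;> simp [Fin.ext_iff]
        rw [h1, h2, h3, hs.eq]
      · have h0 : (v ∘ Equiv.swap j.succ.castSucc j.succ.succ) 0 = v 0 := by
          simp only [Function.comp]
          rw [Equiv.swap_apply_of_ne_of_ne] <;> simp [Fin.ext_iff]
        have ht : Fin.tail (v ∘ Equiv.swap j.succ.castSucc j.succ.succ) =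
            Fin.tail v ∘ Equiv.swap j.castSucc j.succ := by
          funext k
          simp only [Fin.tail, Function.comp]
          rw [Fin.castSucc_succ, ← (Fin.succ_injective _).swap_apply]
        rw [hsucc, hsucc (n + 1) x v, h0, ht]
        simp only [ih]

/-- The Taylor polynomial of `ψ` at `0`, split into its homogeneous components `T j`. The remainder
is flat to order `N` at `0`, for all its derivatives. -/
theorem exists_taylor_split {E : Type*} [NormedAddCommGroup E] [NormedSpace ℝ E] {ψ : E → ℂ}
    (hψ : ContDiff ℝ ∞ ψ) (N : ℕ) :
    ∃ T : ℕ → E → ℂ, (∀ j, ContDiff ℝ ∞ (T j)) ∧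
      (∀ j (s : ℝ) y, T j (s • y) = (s : ℂ) ^ j * T j y) ∧
      ∀ i < N, iteratedFDeriv ℝ i (fun y => ψ y - ∑ j ∈ Finset.range N, T j y) 0 = 0 := by
  let D : (j : ℕ) → E → ℂ := fun j y => iteratedFDeriv ℝ j ψ 0 (fun _ => y)
  have hD : ∀ j, ContDiff ℝ ∞ (D j) := fun j =>
    (ContinuousMultilinearMap.contDiff _).comp (contDiff_pi.2 fun _ => contDiff_id)
  have hhom : ∀ j (s : ℝ) y, D j (s • y) = s ^ j • D j y := by
    intro j s y
    simpa using (iteratedFDeriv ℝ j ψ 0).map_smul_univ (fun _ => s) (fun _ => y)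
  refine ⟨fun j y => ((j.factorial : ℝ)⁻¹) • D j y, fun j => (hD j).const_smul _, ?_, ?_⟩
  · intro j s y
    simp only [hhom, Complex.real_smul]
    push_cast
    ring
  · intro i hi
    -- Differentiating `T j (2 • y) = 2 ^ j • T j y` at `0` gives `2 ^ i • _ = 2 ^ j • _`.
    have hne : ∀ j, j ≠ i → iteratedFDeriv ℝ i (D j) 0 = 0 := by
      intro j hj
      have h1 : (fun z => D j ((2 : ℝ) • z)) = fun z => (2 : ℝ) ^ j • D j z :=
        funext fun z => hhom j 2 z
      have h2 := congrFun (iteratedFDeriv_comp_const_smul (i := i) (2 : ℝ)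
        ((hD j).of_le (by exact_mod_cast le_top))) 0
      rw [h1, iteratedFDeriv_const_smul_apply' ((hD j).of_le (by exact_mod_cast le_top)).contDiffAt,
        smul_zero, ← sub_eq_zero, ← sub_smul] at h2
      refine (smul_eq_zero.1 h2).resolve_left ?_
      refine sub_ne_zero.2 ?_
      exact fun h => hj (pow_right_injective₀ (by norm_num) (by norm_num) h)
    have heq : iteratedFDeriv ℝ i (D i) 0 = (i.factorial : ℝ) • iteratedFDeriv ℝ i ψ 0 := by
      ext v
      rw [ContinuousMultilinearMap.iteratedFDeriv_comp_diagonal]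
      have : ∀ σ : Equiv.Perm (Fin i), iteratedFDeriv ℝ i ψ 0 (fun k => v (σ k)) =
          iteratedFDeriv ℝ i ψ 0 v := fun σ => iteratedFDeriv_perm_of_smooth hψ i 0 v σ
      simp [this, Fintype.card_perm]
    have hcd : ∀ j, ContDiff ℝ i (fun y => ((j.factorial : ℝ)⁻¹) • D j y) := fun j =>
      ((hD j).const_smul _).of_le (by exact_mod_cast le_top)
    have hfun : (fun y => ψ y - ∑ j ∈ Finset.range N, ((j.factorial : ℝ)⁻¹) • D j y) =
        ψ - fun y => ∑ j ∈ Finset.range N, ((j.factorial : ℝ)⁻¹) • D j y := rfl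
    rw [hfun, iteratedFDeriv_sub_apply (hψ.of_le (by exact_mod_cast le_top)).contDiffAt
      (ContDiff.sum fun j _ => hcd j).contDiffAt,
      iteratedFDeriv_fun_sum_apply (fun j _ => (hcd j).contDiffAt),
      Finset.sum_eq_single_of_mem i (Finset.mem_range.2 hi)]
    · rw [iteratedFDeriv_const_smul_apply' ((hD i).of_le (by exact_mod_cast le_top)).contDiffAt,
        heq, smul_smul, inv_mul_cancel₀ (by exact_mod_cast i.factorial_ne_zero), one_smul, sub_self]
    · intro j _ hj
      rw [iteratedFDeriv_const_smul_apply' ((hD j).of_le (by exact_mod_cast le_top)).contDiffAt,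
        hne j hj, smul_zero]

/-- Descending induction on `i` through the mean value inequality. The subtraction `N - i` truncates,
so that for `i ≥ N` the bound is mere boundedness on the unit ball. -/
theorem exists_remainder_bound {E : Type*} [NormedAddCommGroup E] [NormedSpace ℝ E]
    [ProperSpace E] {R : E → ℂ} (hR : ContDiff ℝ ∞ R) (N : ℕ)
    (h0 : ∀ i < N, iteratedFDeriv ℝ i R 0 = 0) (i : ℕ) :
    ∃ C : ℝ, 0 ≤ C ∧ ∀ z : E, ‖z‖ ≤ 1 → ‖iteratedFDeriv ℝ i R z‖ ≤ C * ‖z‖ ^ (N - i) := by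
  induction hd : N - i generalizing i with
  | zero =>
    obtain ⟨C, hC⟩ := (isCompact_closedBall (0 : E) 1).exists_bound_of_continuousOn
      (hR.continuous_iteratedFDeriv (m := i) (by exact_mod_cast le_top)).continuousOn
    refine ⟨max C 0, le_max_right _ _, fun z hz => ?_⟩
    simpa using Or.inl (hC z (by simpa using hz))
  | succ d ih =>
    obtain ⟨C, hC0, hC⟩ := ih (i + 1) (by omega)
    refine ⟨C, hC0, fun z hz => ?_⟩
    have := (convex_closedBall (0 : E) ‖z‖).norm_image_sub_le_of_norm_fderiv_le
      (f := iteratedFDeriv ℝ i R) (𝕜 := ℝ) (C := C * ‖z‖ ^ d) (x := 0) (y := z)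
      (fun w _ => hR.differentiable_iteratedFDeriv
        (by exact_mod_cast WithTop.coe_lt_top (α := ℕ) i) w)
      (fun w hw => by
        have hw' : ‖w‖ ≤ ‖z‖ := by simpa using hw
        rw [norm_fderiv_iteratedFDeriv]
        exact (hC w (hw'.trans hz)).trans (by gcongr))
      (by simp) (by simp)
    rw [h0 i (by omega), sub_zero, sub_zero] at this
    rwa [pow_succ, ← mul_assoc]

/-- The chain rule produces the factor `s ^ i` that makes up for the order lost by
differentiating `i` times. -/
theorem exists_dilate_bound {E : Type*} [NormedAddCommGroup E] [NormedSpace ℝ E]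
    [ProperSpace E] {R : E → ℂ} (hR : ContDiff ℝ ∞ R) (N : ℕ)
    (h0 : ∀ i < N, iteratedFDeriv ℝ i R 0 = 0) (i : ℕ) :
    ∃ C : ℝ, 0 ≤ C ∧ ∀ s : ℝ, |s| ≤ 1 → ∀ y : E, ‖y‖ ≤ 1 →
      ‖iteratedFDeriv ℝ i (fun z => R (s • z)) y‖ ≤ C * |s| ^ N := by
  obtain ⟨C, hC0, hC⟩ := exists_remainder_bound hR N h0 i
  refine ⟨C, hC0, fun s hs y hy => ?_⟩
  rw [iteratedFDeriv_comp_const_smul s (hR.of_le (by exact_mod_cast le_top))]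
  have hsy : ‖s • y‖ ≤ |s| := by
    rw [norm_smul, Real.norm_eq_abs]
    exact mul_le_of_le_one_right (abs_nonneg s) hy
  calc ‖s ^ i • iteratedFDeriv ℝ i R (s • y)‖
      = |s| ^ i * ‖iteratedFDeriv ℝ i R (s • y)‖ := by rw [norm_smul]; simp
    _ ≤ |s| ^ i * (C * |s| ^ (N - i)) := by
        gcongr
        exact (hC _ (hsy.trans hs)).trans (by gcongr)
    _ = C * |s| ^ (i + (N - i)) := by rw [pow_add]; ring
    _ ≤ C * |s| ^ N := by
        gcongr ?_ * ?_
        exact pow_le_pow_of_le_one (abs_nonneg s) hs (by omega)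

end Taylor

/-! ### Expansion of the dilates of a test function -/

section Dilation
open scoped ContDiff Topology SchwartzMap

/-- A smooth bump function on `ℝⁿ`, equal to `1` on the ball of radius `1 / 2` and supported in the
unit ball. -/
def cutoff (n : ℕ) : ContDiffBump (0 : Euc n) := ⟨1 / 2, 1, by norm_num, by norm_num⟩

theorem contDiff_cutoff (n : ℕ) : ContDiff ℝ ∞ fun y : Euc n => ((cutoff n y : ℝ) : ℂ) :=
  Complex.ofRealCLM.contDiff.comp (cutoff n).contDiff

theorem support_cutoff_mul (n : ℕ) (g : Euc n → ℂ) :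
    tsupport (fun y => ((cutoff n y : ℝ) : ℂ) * g y) ⊆ Metric.closedBall 0 1 := by
  change _ ⊆ Metric.closedBall 0 (cutoff n).rOut
  rw [← (cutoff n).tsupport_eq]
  refine closure_mono fun y hy => ?_
  rw [Function.mem_support] at hy ⊢
  intro h
  simp [h] at hy

/-- The Schwartz function obtained by multiplying a smooth function `g` by `cutoff n`. -/
def cut {n : ℕ} (g : Euc n → ℂ) (hg : ContDiff ℝ ∞ g) : SchwartzMap (Euc n) ℂ :=
  HasCompactSupport.toSchwartzMap (f := fun y => ((cutoff n y : ℝ) : ℂ) * g y)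
    (HasCompactSupport.of_support_subset_isCompact (isCompact_closedBall 0 1)
      (subset_closure.trans (support_cutoff_mul n g)))
    ((contDiff_cutoff n).mul hg)

theorem cut_apply {n : ℕ} (g : Euc n → ℂ) (hg : ContDiff ℝ ∞ g) (y : Euc n) :
    cut g hg y = ((cutoff n y : ℝ) : ℂ) * g y := rfl

theorem exists_seminorm_cut_dilate_bound {n : ℕ} {R : Euc n → ℂ} (hR : ContDiff ℝ ∞ R) (N : ℕ)
    (h0 : ∀ i < N, iteratedFDeriv ℝ i R 0 = 0) (k i : ℕ) :
    ∃ C : ℝ, 0 ≤ C ∧ ∀ s : ℝ, |s| ≤ 1 → ∀ hs : ContDiff ℝ ∞ (fun z => R (s • z)),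
      SchwartzMap.seminorm ℂ k i (cut (fun z => R (s • z)) hs) ≤ C * |s| ^ N := by
  choose B hB0 hB using fun j => exists_dilate_bound hR N h0 j
  have hA : ∀ j : ℕ, ∃ A : ℝ, 0 ≤ A ∧ ∀ y : Euc n, ‖y‖ ≤ 1 →
      ‖iteratedFDeriv ℝ j (fun y : Euc n => ((cutoff n y : ℝ) : ℂ)) y‖ ≤ A := by
    intro j
    obtain ⟨A, hA⟩ := (isCompact_closedBall (0 : Euc n) 1).exists_bound_of_continuousOn
      ((contDiff_cutoff n).continuous_iteratedFDeriv (m := j)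
        (by exact_mod_cast le_top)).continuousOn
    exact ⟨max A 0, le_max_right _ _, fun y hy => (hA y (by simpa using hy)).trans
      (le_max_left _ _)⟩
  choose A hA0 hA using hA
  have hC0 : 0 ≤ ∑ j ∈ Finset.range (i + 1), (i.choose j : ℝ) * A j * B (i - j) :=
    Finset.sum_nonneg fun j _ => mul_nonneg (mul_nonneg (by positivity) (hA0 j)) (hB0 _)
  refine ⟨_, hC0, fun s hs1 hs => ?_⟩
  refine SchwartzMap.seminorm_le_bound ℂ k i _ (mul_nonneg hC0 (by positivity)) fun y => ?_
  by_cases hy : ‖y‖ ≤ 1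
  · calc ‖y‖ ^ k * ‖iteratedFDeriv ℝ i (cut (fun z => R (s • z)) hs) y‖
        ≤ 1 * ‖iteratedFDeriv ℝ i (cut (fun z => R (s • z)) hs) y‖ := by
          gcongr
          exact pow_le_one₀ (norm_nonneg _) hy
      _ = ‖iteratedFDeriv ℝ i (fun z => ((cutoff n z : ℝ) : ℂ) * R (s • z)) y‖ := one_mul _
      _ ≤ _ := norm_iteratedFDeriv_mul_le (contDiff_cutoff n) hs y (by exact_mod_cast le_top)
      _ ≤ ∑ j ∈ Finset.range (i + 1), (i.choose j : ℝ) * A j * (B (i - j) * |s| ^ N) := by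
          gcongr with j _
          · exact mul_nonneg (by positivity) (hA0 j)
          · exact hA j y hy
          · exact hB (i - j) s hs1 y hy
      _ = _ := by rw [Finset.sum_mul]; simp only [mul_assoc]
  · have hz : iteratedFDeriv ℝ i (cut (fun z => R (s • z)) hs) y = 0 := by
      by_contra hne
      have h1 := support_iteratedFDeriv_subset (𝕜 := ℝ) i (Function.mem_support.2 hne)
      exact hy (by simpa using support_cutoff_mul n _ h1)
    rw [hz, norm_zero, mul_zero]
    exact mul_nonneg hC0 (by positivity)

theorem exists_apply_cut_dilate_bound {n : ℕ} (U : TempDist n) {R : Euc n → ℂ}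
    (hR : ContDiff ℝ ∞ R) (N : ℕ) (h0 : ∀ i < N, iteratedFDeriv ℝ i R 0 = 0) :
    ∃ C : ℝ, ∀ s : ℝ, |s| ≤ 1 → ∀ hs : ContDiff ℝ ∞ (fun z => R (s • z)),
      ‖U (cut (fun z => R (s • z)) hs)‖ ≤ C * |s| ^ N := by
  obtain ⟨S, K, -, hK⟩ := Seminorm.bound_of_continuous (schwartz_withSeminorms ℂ (Euc n) ℂ)
    ((normSeminorm ℂ ℂ).comp U.toLinearMap) (continuous_norm.comp U.continuous)
  choose C hC0 hC using fun m : ℕ × ℕ => exists_seminorm_cut_dilate_bound hR N h0 m.1 m.2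
  refine ⟨K * ∑ m ∈ S, C m, fun s hs1 hs => ?_⟩
  refine (hK _).trans ?_
  rw [mul_assoc]
  refine mul_le_mul_of_nonneg_left ?_ K.2
  refine Seminorm.finset_sup_apply_le
    (mul_nonneg (Finset.sum_nonneg fun m _ => hC0 m) (by positivity)) fun m hm => ?_
  refine (hC m s hs1 hs).trans ?_
  gcongr
  exact Finset.single_le_sum (f := C) (fun m _ => hC0 m) hm

/-- For `U` supported at the origin, `s ↦ ⟨U, ψ(s ·)⟩` has a Taylor expansion at `s = 0`, valid for `s`
of either sign with the same coefficients. The coefficients are the values of `U` on the cut-off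
homogeneous Taylor components of `ψ`. -/
theorem exists_dilate_expansion {n : ℕ} (U : TempDist n)
    (hsupp : ∀ ψ : SchwartzMap (Euc n) ℂ, (∀ᶠ y in 𝓝 (0 : Euc n), ψ y = 0) → U ψ = 0)
    (ψ : SchwartzMap (Euc n) ℂ) (N : ℕ) :
    ∃ (a : ℕ → ℂ) (C : ℝ), ∀ s : ℝ, |s| ≤ 1 → ∀ φ : SchwartzMap (Euc n) ℂ,
      (∀ y, φ y = ψ (s • y)) →
      ‖U φ - ∑ j ∈ Finset.range N, (s : ℂ) ^ j * a j‖ ≤ C * |s| ^ N := by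
  obtain ⟨T, hT, hhom, h0⟩ := exists_taylor_split (ψ.smooth ⊤) N
  have hR : ContDiff ℝ ∞ (fun y => ψ y - ∑ j ∈ Finset.range N, T j y) :=
    (ψ.smooth ⊤).sub (ContDiff.sum fun j _ => hT j)
  obtain ⟨C, hC⟩ := exists_apply_cut_dilate_bound U hR N h0
  refine ⟨fun j => U (cut (T j) (hT j)), C, fun s hs1 φ hφ => ?_⟩
  have hs : ContDiff ℝ ∞ (fun z : Euc n =>
      (fun y => ψ y - ∑ j ∈ Finset.range N, T j y) (s • z)) :=
    hR.comp (contDiff_const_smul s)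
  convert hC s hs1 hs using 2
  have h1 : U φ = U (cut φ (φ.smooth ⊤)) := by
    rw [← sub_eq_zero, ← map_sub]
    refine hsupp _ ?_
    filter_upwards [(cutoff n).eventuallyEq_one] with y hy
    simp [cut_apply, hy]
  rw [h1]
  simp only [← smul_eq_mul, ← map_smul]
  rw [← map_sum, ← map_sub]
  congr 1
  ext y
  simp [cut_apply, hφ, hhom, mul_sub, Finset.mul_sum, mul_left_comm]

end Dilation

/-! ### Comparison with the log-homogeneous scaling -/

section Scaling
open scoped Topology

theorem tendsto_eval_mul_exp_neg (P : Polynomial ℂ) :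
    Tendsto (fun x : ℝ => P.eval (x : ℂ) * ((Real.exp (-x) : ℝ) : ℂ)) atTop (𝓝 0) := by
  have h : ∀ i : ℕ, Tendsto (fun x : ℝ => P.coeff i * ((x ^ i * Real.exp (-x) : ℝ) : ℂ))
      atTop (𝓝 0) := by
    intro i
    have := (Complex.continuous_ofReal.tendsto 0).comp
      (Real.tendsto_pow_mul_exp_neg_atTop_nhds_zero i)
    simpa using this.const_mul (P.coeff i)
  have h2 := tendsto_finsetSum (Finset.range (P.natDegree + 1)) (fun i _ => h i)
  simp only [Finset.sum_const_zero] at h2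
  refine h2.congr fun x => ?_
  rw [Polynomial.eval_eq_sum_range, Finset.sum_mul]
  refine Finset.sum_congr rfl fun i _ => ?_
  push_cast
  ring

/-- A polynomial asymptotic to a combination of the exponentials `exp (m x)`, `m ≤ p`, is constant:
the coefficient of the fastest exponential must vanish as long as it genuinely grows. -/
theorem eval_eq_of_tendsto_sub_exp (P : Polynomial ℂ) (p : ℕ) (b : ℕ → ℂ)
    (h : Tendsto (fun x : ℝ => P.eval (x : ℂ) -
      ∑ m ∈ Finset.range (p + 1), b m * ((Real.exp x : ℝ) : ℂ) ^ m) atTop (𝓝 0)) :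
    ∀ z, P.eval z = b 0 := by
  induction p with
  | zero =>
    have hdeg : P.degree ≤ 0 := by
      by_contra! hd
      have h1 : Tendsto (fun x : ℝ => ‖P.eval (x : ℂ)‖) atTop atTop :=
        P.tendsto_norm_atTop hd (by simpa using tendsto_abs_atTop_atTop)
      have h2 : Tendsto (fun x : ℝ => P.eval (x : ℂ)) atTop (𝓝 (b 0)) := by
        simpa using h.add_const (b 0)
      exact not_tendsto_nhds_of_tendsto_atTop h1 _ h2.norm
    rw [Polynomial.eq_C_of_degree_le_zero hdeg] at h ⊢
    simp only [Polynomial.eval_C] at h ⊢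
    intro _
    simp only [zero_add, Finset.sum_range_one, pow_zero, mul_one] at h
    exact sub_eq_zero.1 (tendsto_nhds_unique tendsto_const_nhds h)
  | succ p ih =>
    have hE : Tendsto (fun x : ℝ => ((Real.exp (-x) : ℝ) : ℂ)) atTop (𝓝 0) := by
      exact (Complex.continuous_ofReal.tendsto' 0 0 Complex.ofReal_zero).comp
        Real.tendsto_exp_neg_atTop_nhds_zero
    have hmul : ∀ x : ℝ, ((Real.exp x : ℝ) : ℂ) * ((Real.exp (-x) : ℝ) : ℂ) = 1 := by
      intro x
      rw [← Complex.ofReal_mul, ← Real.exp_add]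
      simp
    -- Multiply by `exp (-(p + 1) x)` and let `x → ∞`: only the top coefficient survives.
    have htop : b (p + 1) = 0 := by
      have h1 := (tendsto_eval_mul_exp_neg P).mul (hE.pow p)
      have h2 : Tendsto (fun x : ℝ => ∑ m ∈ Finset.range (p + 1),
          b m * (((Real.exp (-x) : ℝ) : ℂ) ^ (p - m) * ((Real.exp (-x) : ℝ) : ℂ)))
          atTop (𝓝 0) := by
        have := tendsto_finsetSum (Finset.range (p + 1))
          (fun m _ => ((hE.pow (p - m)).mul hE).const_mul (b m))
        simpa using this
      have h3 := h.mul (hE.pow (p + 1))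
      have h4 := (h1.sub h2).sub h3
      rw [zero_mul, zero_mul, sub_zero, sub_zero] at h4
      refine tendsto_nhds_unique (tendsto_const_nhds.congr fun x => ?_) h4
      rw [Finset.sum_range_succ _ (p + 1)]
      have h5 : ∀ m ∈ Finset.range (p + 1),
          b m * (((Real.exp (-x) : ℝ) : ℂ) ^ (p - m) * ((Real.exp (-x) : ℝ) : ℂ)) =
          b m * ((Real.exp x : ℝ) : ℂ) ^ m * ((Real.exp (-x) : ℝ) : ℂ) ^ (p + 1) := by
        intro m hm
        have hm' : m ≤ p := by simpa [Nat.lt_succ_iff] using hm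
        obtain ⟨d, rfl⟩ := Nat.exists_eq_add_of_le hm'
        have := hmul x
        rw [Nat.add_sub_cancel_left, pow_succ _ (m + d), pow_add _ m d]
        have h6 : ((Real.exp x : ℝ) : ℂ) ^ m * ((Real.exp (-x) : ℝ) : ℂ) ^ m = 1 := by
          rw [← mul_pow, this, one_pow]
        linear_combination (-(b m * ((Real.exp (-x) : ℝ) : ℂ) ^ d *
          ((Real.exp (-x) : ℝ) : ℂ))) * h6
      rw [Finset.sum_congr rfl h5, ← Finset.sum_mul]
      have h7 : ((Real.exp x : ℝ) : ℂ) ^ (p + 1) * ((Real.exp (-x) : ℝ) : ℂ) ^ (p + 1) = 1 := by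
        rw [← mul_pow, hmul, one_pow]
      linear_combination (-b (p + 1)) * h7
    refine ih (h.congr fun x => ?_)
    rw [Finset.sum_range_succ _ (p + 1), htop, zero_mul, add_zero]

/-- The scaling law at `t = exp x`, with the Jacobian factor `t ^ n` cancelled. -/
theorem logHom_apply_exp {n p k : ℕ} {U : TempDist n} {Uj : Fin (k + 1) → TempDist n}
    (hU : IsLogHomDistWith n (-(n : ℂ) - (p : ℂ)) k U Uj) (ψ φ : SchwartzMap (Euc n) ℂ) (x : ℝ)
    (hφ : ∀ y, φ y = ψ (Real.exp (-x) • y)) :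
    ((Real.exp x : ℝ) : ℂ) ^ p * U φ = ∑ j : Fin (k + 1), (x : ℂ) ^ (j : ℕ) * Uj j ψ := by
  have h := hU (Real.exp x) (Real.exp_pos x) ψ ((((Real.exp x ^ n)⁻¹ : ℝ) : ℂ) • φ) (fun y => by
    simp [hφ, Real.exp_neg])
  have hne : ((Real.exp x : ℝ) : ℂ) ≠ 0 := by exact_mod_cast (Real.exp_pos x).ne'
  have hpow : ((Real.exp x : ℝ) : ℂ) ^ (-(n : ℂ) - (p : ℂ)) =
      (((Real.exp x : ℝ) : ℂ) ^ n * ((Real.exp x : ℝ) : ℂ) ^ p)⁻¹ := by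
    rw [← pow_add, ← Complex.cpow_natCast, ← Complex.cpow_neg]
    congr 1
    push_cast
    ring
  rw [hpow, map_smul, Real.log_exp, smul_eq_mul, Complex.ofReal_inv, Complex.ofReal_pow,
    mul_inv, mul_assoc] at h
  rw [mul_left_cancel₀ (inv_ne_zero (pow_ne_zero n hne)) h, mul_inv_cancel_left₀
    (pow_ne_zero p hne)]

/-- If `s ↦ ⟨U, ψ(s ·)⟩` has a Taylor expansion as `s → 0⁺`, its order-`p` coefficient is `⟨U, ψ⟩`:
with `s = exp (-x)`, `exp (p x) ⟨U, ψ(s ·)⟩` is a polynomial in `x`, which the expansion forces to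
be constant. -/
theorem logHom_eq_coeff {n p k : ℕ} {U : TempDist n}
    (hU : IsLogHomDist n (-(n : ℂ) - (p : ℂ)) k U) (ψ : SchwartzMap (Euc n) ℂ)
    (a : ℕ → ℂ) (C : ℝ)
    (ha : ∀ s : ℝ, 0 < s → s ≤ 1 → ∀ φ : SchwartzMap (Euc n) ℂ, (∀ y, φ y = ψ (s • y)) →
      ‖U φ - ∑ j ∈ Finset.range (p + 1), (s : ℂ) ^ j * a j‖ ≤ C * s ^ (p + 1)) :
    U ψ = a p := by
  obtain ⟨Uj, hU⟩ := hU
  let P : Polynomial ℂ := ∑ j : Fin (k + 1), Polynomial.C (Uj j ψ) * Polynomial.X ^ (j : ℕ)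
  have hP : ∀ (x : ℝ) (φ : SchwartzMap (Euc n) ℂ), (∀ y, φ y = ψ (Real.exp (-x) • y)) →
      ((Real.exp x : ℝ) : ℂ) ^ p * U φ = P.eval (x : ℂ) := by
    intro x φ hφ
    rw [logHom_apply_exp hU ψ φ x hφ]
    simp only [P, Polynomial.eval_finsetSum, Polynomial.eval_mul, Polynomial.eval_C,
      Polynomial.eval_pow, Polynomial.eval_X]
    exact Finset.sum_congr rfl fun j _ => mul_comm _ _
  have hψ : U ψ = P.eval 0 := by
    have := hP 0 ψ (by simp)
    simpa using this
  rw [hψ]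
  have hlim := eval_eq_of_tendsto_sub_exp P p (fun m => a (p - m)) ?_ 0
  · simpa using hlim
  rw [tendsto_zero_iff_norm_tendsto_zero]
  have hz : Tendsto (fun x : ℝ => C * Real.exp (-x)) atTop (𝓝 0) := by
    simpa using Real.tendsto_exp_neg_atTop_nhds_zero.const_mul C
  refine squeeze_zero' (Eventually.of_forall fun _ => norm_nonneg _) ?_ hz
  filter_upwards [eventually_ge_atTop 0] with x hx
  let g : Euc n ≃L[ℝ] Euc n := ContinuousLinearEquiv.smulLeft
    (Units.mk0 (Real.exp (-x)) (Real.exp_pos _).ne')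
  let φ : SchwartzMap (Euc n) ℂ := SchwartzMap.compCLMOfContinuousLinearEquiv ℂ g ψ
  have hφ : ∀ y, φ y = ψ (Real.exp (-x) • y) := fun y => rfl
  have h1 := ha (Real.exp (-x)) (Real.exp_pos _) (by simpa using hx) φ hφ
  have h2 : P.eval (x : ℂ) - ∑ m ∈ Finset.range (p + 1),
      a (p - m) * ((Real.exp x : ℝ) : ℂ) ^ m = ((Real.exp x : ℝ) : ℂ) ^ p *
      (U φ - ∑ j ∈ Finset.range (p + 1), ((Real.exp (-x) : ℝ) : ℂ) ^ j * a j) := by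
    rw [mul_sub, hP x φ hφ, Finset.mul_sum, ← Finset.sum_range_reflect]
    congr 1
    refine Finset.sum_congr rfl fun j hj => ?_
    have hj' : j ≤ p := by simpa [Nat.lt_succ_iff] using hj
    obtain ⟨d, rfl⟩ := Nat.exists_eq_add_of_le hj'
    have e1 : j + d + 1 - 1 - j = d := by omega
    have e2 : j + d - d = j := by omega
    have hne : ((Real.exp x : ℝ) : ℂ) ≠ 0 := by exact_mod_cast (Real.exp_pos x).ne'
    rw [e1, e2, Real.exp_neg, Complex.ofReal_inv, pow_add, inv_pow]
    field_simp
  rw [h2, norm_mul, norm_pow, Complex.norm_real, Real.norm_eq_abs, Real.abs_exp]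
  calc Real.exp x ^ p * _ ≤ Real.exp x ^ p * (C * Real.exp (-x) ^ (p + 1)) := by gcongr
    _ = C * Real.exp (-x) := by
      have h3 : Real.exp x ^ p * Real.exp (-x) ^ p = 1 := by
        rw [← mul_pow, ← Real.exp_add]
        simp
      rw [pow_succ]
      linear_combination (C * Real.exp (-x)) * h3

end Scaling

/-- A tempered distribution on `ℝⁿ`, log-homogeneous of order `(-n-p, k)`
and supported at the origin, has parity `(-1)^p`: `⟨U, ψ(-·)⟩ = (-1)^p ⟨U, ψ⟩`. -/
theorem statement4 (n : ℕ) (hn : 1 ≤ n) (p k : ℕ) (U : TempDist n)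
    (hU : IsLogHomDist n (-(n : ℂ) - (p : ℂ)) k U)
    (hsupp : ∀ ψ : SchwartzMap (Euc n) ℂ, (∀ᶠ y in nhds (0 : Euc n), ψ y = 0) → U ψ = 0) :
    ∀ ψ φ : SchwartzMap (Euc n) ℂ, (∀ y : Euc n, φ y = ψ (-y)) →
      U φ = (-1 : ℂ) ^ p * U ψ := by
  intro ψ φ hφ
  obtain ⟨a, C, h⟩ := exists_dilate_expansion U hsupp ψ (p + 1)
  have hψ : U ψ = a p := by
    refine logHom_eq_coeff hU ψ a C fun s hs0 hs1 φs hφs => ?_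
    have := h s (by rwa [abs_of_pos hs0]) φs hφs
    rwa [abs_of_pos hs0] at this
  rw [hψ]
  refine logHom_eq_coeff hU φ (fun j => (-1) ^ j * a j) C fun s hs0 hs1 φs hφs => ?_
  -- `φ (s • y) = ψ ((-s) • y)`, so the expansion of `ψ` at `-s` serves for `φ`.
  have := h (-s) (by rwa [abs_neg, abs_of_pos hs0]) φs (fun y => by rw [hφs, hφ, neg_smul])
  rw [abs_neg, abs_of_pos hs0] at this
  convert this using 4 with j
  rw [Complex.ofReal_neg, neg_pow (s : ℂ)]
  ring
end
end

section
/- Let n ≥ 1, m ∈ ℂ, k ∈ ℕ, and let U be a tempered distribution on ℝⁿ which is log-homogeneous of order (m,k), with scaling components U_0,…,U_k. Then its Fourier transform ℱU is log-homogeneous of order (−n−m, k); more precisely, for every t > 0 and every Schwartz ψ, ⟨ℱU, t^{−n} ψ(·/t)⟩ = t^{−n−m} Σ_{j=0}^{k} (log t)^j ⟨(−1)^j ℱU_j, ψ⟩. -/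
/-!
The `L¹`-normalised dilation `φ = t⁻ⁿ ψ(·/t)` has Fourier transform `ℱφ(ξ) = ℱψ(tξ)`
(`fourier_dilation`), so `tⁿ ℱφ` is the normalised dilation of `ℱψ` by the factor `t⁻¹`.
Log-homogeneity of `U` at scale `t⁻¹` therefore gives
`tⁿ ⟨U, ℱφ⟩ = t⁻ᵐ ∑ (-log t)ʲ ⟨U_j, ℱψ⟩`, and dividing by `tⁿ` is the claim.
-/

open MeasureTheory Complex Filter

noncomputable section

/-- The Fourier transform of a tempered distribution, `⟨ℱU, ψ⟩ = ⟨U, ℱψ⟩`, where `ℱ` on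
Schwartz functions uses the kernel `e^{-2πi⟨y,ξ⟩}`. -/
def fourierDist (n : ℕ) (U : TempDist n) : TempDist n :=
  U.comp (SchwartzMap.fourierTransformCLM ℂ)

/-- The Fourier transform turns the dilation `t⁻ⁿ ψ(·/t)` into `ℱψ(t ·)`. -/
lemma fourier_dilation (n : ℕ) {t : ℝ} (ht : 0 < t) (ψ φ : SchwartzMap (Euc n) ℂ)
    (h : ∀ y : Euc n, φ y = ((t ^ n)⁻¹ : ℝ) • ψ (t⁻¹ • y)) (ξ : Euc n) :
    SchwartzMap.fourierTransformCLM ℂ φ ξ = SchwartzMap.fourierTransformCLM ℂ ψ (t • ξ) := by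
  simp only [SchwartzMap.fourierTransformCLM_apply, SchwartzMap.fourier_coe, Real.fourier_eq]
  -- Substitute `v = t • w` in the integral defining `ℱφ`.
  have key := Measure.integral_comp_smul_of_nonneg (volume : Measure (Euc n))
    (fun v => Real.fourierChar (-inner ℝ v (t • ξ)) • ψ v) t⁻¹ (hR := (inv_pos.2 ht).le)
  simp only [finrank_euclideanSpace, Fintype.card_fin, inv_pow, inv_inv] at key
  have htn : (t ^ n) ≠ 0 := (pow_pos ht n).ne'
  rw [← inv_smul_eq_iff₀ htn, ← integral_smul] at key
  rw [← key]
  refine integral_congr_ae (Eventually.of_forall fun v => ?_)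
  simp only [h v, real_inner_smul_left, real_inner_smul_right, mul_inv_cancel_left₀ ht.ne']
  exact smul_comm (Real.fourierChar (-inner ℝ v ξ)) ((t ^ n)⁻¹) (ψ (t⁻¹ • v))

/-- The scaling identity for `ℱU`, with scaling components `(-1)ʲ ℱU_j`. -/
lemma fourierDist_dilation (n : ℕ) (m : ℂ) (k : ℕ)
    (U : TempDist n) (Uj : Fin (k + 1) → TempDist n)
    (hU : IsLogHomDistWith n m k U Uj) (t : ℝ) (ht : 0 < t) (ψ φ : SchwartzMap (Euc n) ℂ)
    (h : ∀ y : Euc n, φ y = ((t ^ n)⁻¹ : ℝ) • ψ (t⁻¹ • y)) :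
    fourierDist n U φ = (t : ℂ) ^ (-(n : ℂ) - m) *
      ∑ j : Fin (k + 1), (Real.log t : ℂ) ^ (j : ℕ) *
        ((-1 : ℂ) ^ (j : ℕ) * fourierDist n (Uj j) ψ) := by
  have htC : (t : ℂ) ≠ 0 := ofReal_ne_zero.2 ht.ne'
  have e := hU t⁻¹ (inv_pos.2 ht) (SchwartzMap.fourierTransformCLM ℂ ψ)
    (((t : ℂ) ^ n) • SchwartzMap.fourierTransformCLM ℂ φ) (fun y => by
      rw [smul_apply, fourier_dilation n ht ψ φ h, inv_pow, inv_inv, inv_inv,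
        real_smul, ofReal_pow, smul_eq_mul])
  rw [map_smul, smul_eq_mul] at e
  have hm : ((t⁻¹ : ℝ) : ℂ) ^ m = (t : ℂ) ^ (-m) := by
    rw [ofReal_inv, inv_cpow _ _ (by rw [arg_ofReal_of_nonneg ht.le]; exact Real.pi_pos.ne),
      cpow_neg]
  have hn : (t : ℂ) ^ (-(n : ℂ) - m) = ((t : ℂ) ^ n)⁻¹ * (t : ℂ) ^ (-m) := by
    rw [sub_eq_add_neg, cpow_add _ _ htC, cpow_neg, cpow_natCast]
  rw [hm] at e
  have hs : ∀ j : Fin (k + 1), (Real.log t : ℂ) ^ (j : ℕ) *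
        ((-1 : ℂ) ^ (j : ℕ) * fourierDist n (Uj j) ψ) =
      (Real.log t⁻¹ : ℂ) ^ (j : ℕ) * Uj j (SchwartzMap.fourierTransformCLM ℂ ψ) := fun j => by
    rw [Real.log_inv, ofReal_neg, neg_pow (Real.log t : ℂ)]
    change _ * (_ * Uj j (SchwartzMap.fourierTransformCLM ℂ ψ)) = _
    ring
  rw [Finset.sum_congr rfl fun j _ => hs j, hn, mul_assoc, ← e,
    inv_mul_cancel_left₀ (pow_ne_zero n htC)]
  rfl

/-- The Fourier transform of a tempered distribution which is
log-homogeneous of order `(m,k)` with scaling components `U_j` is log-homogeneous of order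
`(-n-m, k)`; more precisely `⟨ℱU, t^{-n}ψ(·/t)⟩ = t^{-n-m} ∑_j (log t)^j ⟨(-1)^j ℱU_j, ψ⟩`. -/
theorem statement5 (n : ℕ) (hn : 1 ≤ n) (m : ℂ) (k : ℕ)
    (U : TempDist n) (Uj : Fin (k + 1) → TempDist n)
    (hU : IsLogHomDistWith n m k U Uj) :
    IsLogHomDist n (-(n : ℂ) - m) k (fourierDist n U) ∧
    ∀ (t : ℝ), 0 < t → ∀ (ψ φ : SchwartzMap (Euc n) ℂ),
      (∀ y : Euc n, φ y = ((t ^ n)⁻¹ : ℝ) • ψ (t⁻¹ • y)) →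
      fourierDist n U φ = (t : ℂ) ^ (-(n : ℂ) - m) *
        ∑ j : Fin (k + 1), (Real.log t : ℂ) ^ (j : ℕ) *
          ((-1 : ℂ) ^ (j : ℕ) * fourierDist n (Uj j) ψ) := by
  refine ⟨⟨fun j => (-1 : ℂ) ^ (j : ℕ) • fourierDist n (Uj j), ?_⟩,
    fourierDist_dilation n m k U Uj hU⟩
  intro t ht ψ φ h
  simpa only [smul_apply, smul_eq_mul] using
    fourierDist_dilation n m k U Uj hU t ht ψ φ h
end
end
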